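/- arXiv:0804.0590 — 4 statements merged into one kernel-verified Lean document; each statement's English description precedes it below -/
import Mathlib

section
/- Let f, g and f', g' be homogeneous elements of R of positive degrees such that f, g is a regular sequence and f', g' is a regular sequence. If (f',g') ⊆ (f,g) and (deg f')·(deg g') = (deg f)·(deg g), then (f',g') = (f,g). (A height-two complete intersection contained in another one of the same degree is equal to it.) -/
/-
Common setup: `R = k[x₀,…,xₙ]` is the standard graded polynomial ring
`MvPolynomial (Fin (n+1)) k` over a field `k`.
-/

open CategoryTheory MvPolynomial RingTheory

noncomputable section

variable {k : Type} [Field k] {n : ℕ}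

/-- A homogeneous ideal: one generated by homogeneous elements. -/
def IsHomogeneousIdeal (I : Ideal (MvPolynomial (Fin (n+1)) k)) : Prop :=
  ∃ S : Set (MvPolynomial (Fin (n+1)) k),
    (∀ f ∈ S, ∃ d, MvPolynomial.IsHomogeneous f d) ∧ I = Ideal.span S

/-- The height of an ideal: the infimum of the heights of the primes containing it. -/
def idealHeight (I : Ideal (MvPolynomial (Fin (n+1)) k)) : ℕ∞ :=
  ⨅ (p : PrimeSpectrum (MvPolynomial (Fin (n+1)) k)) (_ : I ≤ p.asIdeal), Order.height p

/-- A complete intersection ideal: one generated by a regular sequence of homogeneous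
elements of positive degree. -/
def IsCI (I : Ideal (MvPolynomial (Fin (n+1)) k)) : Prop :=
  ∃ l : List (MvPolynomial (Fin (n+1)) k),
    (∀ f ∈ l, ∃ d, 0 < d ∧ MvPolynomial.IsHomogeneous f d) ∧
    RingTheory.Sequence.IsRegular (MvPolynomial (Fin (n+1)) k) l ∧
    I = Ideal.span {x | x ∈ l}

/-- Vanishing of `Ext^i_R(R/I, R)`. -/
def extVanishes (I : Ideal (MvPolynomial (Fin (n+1)) k)) (i : ℕ) : Prop :=
  Subsingleton (((Ext (MvPolynomial (Fin (n+1)) k) (ModuleCat (MvPolynomial (Fin (n+1)) k)) i).obj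
    (Opposite.op (ModuleCat.of _ (MvPolynomial (Fin (n+1)) k ⧸ I)))).obj
    (ModuleCat.of _ (MvPolynomial (Fin (n+1)) k)))

/-- `Ext^i_R(R/I, R)` is a cyclic `R`-module. -/
def extCyclic (I : Ideal (MvPolynomial (Fin (n+1)) k)) (i : ℕ) : Prop :=
  ∃ m : (((Ext (MvPolynomial (Fin (n+1)) k) (ModuleCat (MvPolynomial (Fin (n+1)) k)) i).obj
      (Opposite.op (ModuleCat.of _ (MvPolynomial (Fin (n+1)) k ⧸ I)))).obj
      (ModuleCat.of _ (MvPolynomial (Fin (n+1)) k))),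
    Submodule.span (MvPolynomial (Fin (n+1)) k) {m} = ⊤

/-- An arithmetically Gorenstein homogeneous ideal of height three: a proper homogeneous
ideal of height 3 with `Ext^i_R(R/I, R) = 0` for `i ≠ 3` and `Ext^3_R(R/I, R)` cyclic. -/
def IsArithGorHt3 (I : Ideal (MvPolynomial (Fin (n+1)) k)) : Prop :=
  I ≠ ⊤ ∧ IsHomogeneousIdeal I ∧ idealHeight I = 3 ∧
    (∀ i : ℕ, i ≠ 3 → extVanishes I i) ∧ extCyclic I 3

/-- `μ(I)`: the least cardinality of a subset of `R` generating `I`. -/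
def mu (I : Ideal (MvPolynomial (Fin (n+1)) k)) : ℕ :=
  sInf {m : ℕ | ∃ S : Finset (MvPolynomial (Fin (n+1)) k),
    S.card = m ∧ Ideal.span (S : Set (MvPolynomial (Fin (n+1)) k)) = I}

/-- `a_i(I)`: the least integer `d` such that `I` contains a regular sequence of `i`
homogeneous elements each of degree at most `d`. -/
def aDeg (i : ℕ) (I : Ideal (MvPolynomial (Fin (n+1)) k)) : ℕ :=
  sInf {d : ℕ | ∃ l : List (MvPolynomial (Fin (n+1)) k), l.length = i ∧
    (∀ f ∈ l, f ∈ I) ∧ (∀ f ∈ l, ∃ e ≤ d, MvPolynomial.IsHomogeneous f e) ∧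
    RingTheory.Sequence.IsRegular (MvPolynomial (Fin (n+1)) k) l}

/-- A minimal complete intersection inside a height-three homogeneous ideal `I`:
a regular sequence `f₁, f₂, f₃` of homogeneous elements of `I` with `deg fⱼ = a_j(I)`. -/
def IsMinCI (I : Ideal (MvPolynomial (Fin (n+1)) k)) (f₁ f₂ f₃ : MvPolynomial (Fin (n+1)) k) :
    Prop :=
  f₁ ∈ I ∧ f₂ ∈ I ∧ f₃ ∈ I ∧
  MvPolynomial.IsHomogeneous f₁ (aDeg 1 I) ∧ MvPolynomial.IsHomogeneous f₂ (aDeg 2 I) ∧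
  MvPolynomial.IsHomogeneous f₃ (aDeg 3 I) ∧
  RingTheory.Sequence.IsRegular (MvPolynomial (Fin (n+1)) k) [f₁, f₂, f₃]

/-!
Write `f' = a f + b g` and `g' = c f + d g` with homogeneous coefficients. By Cramer's rule it is
enough that the determinant `a d - b c` is a unit. It is nonzero: if it vanished, then
`a g' = c f'` and `b g' = d f'`, so regularity would make `f'` divide `a` and `b`, and cancelling
`f'` from `f' = a f + b g` would put `1` in `(f, g)`. So one of the products `a d`, `b c` is
nonzero, which bounds the degrees of `f', g'` below by those of `f, g` in some order; the condition
on the products of the degrees turns these bounds into equalities. The determinant then has degree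
zero, and a nonzero element of degree zero is a unit.
-/

section Determinant

variable {R : Type*} [CommRing R] {x y f g a b c d : R}

lemma dvd_of_dvd_mul_of_isWeaklyRegular_pair (h : Sequence.IsWeaklyRegular R [x, y])
    (hdvd : x ∣ y * a) : x ∣ a := by
  have hy := mem_of_isSMulRegular_quotient_of_smul_mem (x := a) (h.regular_mod_prev 1 (by simp))
  simp only [List.take_succ_cons, List.take_zero, Ideal.ofList_singleton, smul_eq_mul,
    Ideal.mul_top, Ideal.mem_span_singleton] at hy
  exact hy hdvd

lemma det_ne_zero_of_isWeaklyRegular_pair (h : Sequence.IsWeaklyRegular R [x, y])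
    (hx : a * f + b * g = x) (hy : c * f + d * g = y) (htop : Ideal.span {f, g} ≠ ⊤) :
    a * d - b * c ≠ 0 := by
  intro hdet
  have hya : y * a = x * c := by linear_combination g * hdet + c * hx - a * hy
  have hyb : y * b = x * d := by linear_combination d * hx - b * hy - f * hdet
  obtain ⟨s, rfl⟩ := dvd_of_dvd_mul_of_isWeaklyRegular_pair h (Dvd.intro c hya.symm)
  obtain ⟨t, rfl⟩ := dvd_of_dvd_mul_of_isWeaklyRegular_pair h (Dvd.intro d hyb.symm)
  have hxreg : IsSMulRegular R x := ((Sequence.isWeaklyRegular_cons_iff R x [y]).mp h).1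
  have hone : s * f + t * g = 1 := hxreg (by simp only [smul_eq_mul]; linear_combination hx)
  exact htop ((Ideal.eq_top_iff_one _).mpr (Ideal.mem_span_pair.mpr ⟨s, t, hone⟩))

lemma span_pair_le_span_pair_of_isUnit_det (hx : a * f + b * g = x) (hy : c * f + d * g = y)
    (hdet : IsUnit (a * d - b * c)) : Ideal.span {f, g} ≤ Ideal.span {x, y} := by
  have hf : (a * d - b * c) * f ∈ Ideal.span {x, y} :=
    Ideal.mem_span_pair.mpr ⟨d, -b, by linear_combination b * hy - d * hx⟩
  have hg : (a * d - b * c) * g ∈ Ideal.span {x, y} :=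
    Ideal.mem_span_pair.mpr ⟨-c, a, by linear_combination c * hx - a * hy⟩
  rw [Ideal.span_le, Set.pair_subset_iff]
  exact ⟨(Ideal.unit_mul_mem_iff_mem _ hdet).mp hf, (Ideal.unit_mul_mem_iff_mem _ hdet).mp hg⟩

end Determinant

lemma eq_and_eq_of_le_of_mul_le_mul {S : Type*} [Semiring S] [PartialOrder S]
    [IsStrictOrderedRing S] {p q r s : S} (hr : 0 < r) (hs : 0 < s) (hrp : r ≤ p) (hsq : s ≤ q)
    (h : p * q ≤ r * s) : p = r ∧ q = s := by
  have hmul : r * s = p * q := (mul_le_mul hrp hsq hs.le (hr.le.trans hrp)).antisymm h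
  obtain ⟨hpr, hqs⟩ :=
    (mul_eq_mul_iff_eq_and_eq_of_pos hrp hsq hr (hs.trans_le hsq)).mp hmul
  exact ⟨hpr.symm, hqs.symm⟩

section Graded

variable {A σ : Type*} [CommRing A] [SetLike σ A] [AddSubgroupClass σ A] (𝒜 : ℕ → σ)

/-- The extension by zero to degrees in `ℤ` of an `ℕ`-grading. It lets one say that the coefficient
of a generator of degree `e` in an element of degree `d` has degree `d - e`, also when `d < e`. -/
def intGrading : ℤ → AddSubgroup A
  | .ofNat i => AddSubgroup.ofClass (𝒜 i)
  | .negSucc _ => ⊥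

variable {𝒜}

@[simp]
lemma mem_intGrading_natCast {i : ℕ} {a : A} : a ∈ intGrading 𝒜 (i : ℤ) ↔ a ∈ 𝒜 i := Iff.rfl

lemma nonneg_of_mem_intGrading {i : ℤ} {a : A} (ha : a ∈ intGrading 𝒜 i) (ha0 : a ≠ 0) : 0 ≤ i :=
  match i, ha with
  | .ofNat _, _ => Int.natCast_nonneg _
  | .negSucc _, ha => absurd ha ha0

lemma le_and_le_of_det_ne_zero {p q r s : ℕ} {a b c d : A} (ha : a ∈ intGrading 𝒜 (p - r))
    (hb : b ∈ intGrading 𝒜 (p - s)) (hc : c ∈ intGrading 𝒜 (q - r))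
    (hd : d ∈ intGrading 𝒜 (q - s)) (hdet : a * d - b * c ≠ 0) :
    (r ≤ p ∧ s ≤ q) ∨ (s ≤ p ∧ r ≤ q) := by
  have le_of_ne_zero {i j : ℕ} {u : A} (hu : u ∈ intGrading 𝒜 (i - j)) (hu0 : u ≠ 0) : j ≤ i :=
    Int.ofNat_le.mp (sub_nonneg.mp (nonneg_of_mem_intGrading hu hu0))
  by_cases had : a * d = 0
  · have hbc : b * c ≠ 0 := fun hbc => hdet (by rw [had, hbc, sub_zero])
    exact .inr ⟨le_of_ne_zero hb (left_ne_zero_of_mul hbc),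
      le_of_ne_zero hc (right_ne_zero_of_mul hbc)⟩
  · exact .inl ⟨le_of_ne_zero ha (left_ne_zero_of_mul had),
      le_of_ne_zero hd (right_ne_zero_of_mul had)⟩

variable [GradedRing 𝒜]

lemma mul_mem_intGrading {i j : ℤ} {a b : A} (ha : a ∈ intGrading 𝒜 i)
    (hb : b ∈ intGrading 𝒜 j) : a * b ∈ intGrading 𝒜 (i + j) := by
  rcases eq_or_ne a 0 with rfl | ha0
  · simp only [zero_mul, zero_mem]
  rcases eq_or_ne b 0 with rfl | hb0
  · simp only [mul_zero, zero_mem]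
  lift i to ℕ using nonneg_of_mem_intGrading ha ha0
  lift j to ℕ using nonneg_of_mem_intGrading hb hb0
  exact_mod_cast SetLike.mul_mem_graded (A := 𝒜) ha hb

lemma exists_mem_intGrading_decompose_mul_eq {e : ℕ} {f : A} (hf : f ∈ 𝒜 e) (a : A) (m : ℕ) :
    ∃ a' ∈ intGrading 𝒜 (m - e), (DirectSum.decompose 𝒜 (a * f) m : A) = a' * f := by
  by_cases hem : e ≤ m
  · refine ⟨DirectSum.decompose 𝒜 a (m - e), ?_,
      DirectSum.coe_decompose_mul_of_right_mem_of_le 𝒜 hf hem⟩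
    rw [← Nat.cast_sub hem, mem_intGrading_natCast]
    exact SetLike.coe_mem _
  · refine ⟨0, zero_mem _, ?_⟩
    rw [DirectSum.coe_decompose_mul_of_right_mem_of_not_le 𝒜 hf hem, zero_mul]

lemma exists_mem_intGrading_of_mem_span_pair {r s m : ℕ} {f g h : A} (hf : f ∈ 𝒜 r)
    (hg : g ∈ 𝒜 s) (hh : h ∈ 𝒜 m) (hmem : h ∈ Ideal.span {f, g}) :
    ∃ a ∈ intGrading 𝒜 (m - r), ∃ b ∈ intGrading 𝒜 (m - s), a * f + b * g = h := by
  obtain ⟨a, b, hab⟩ := Ideal.mem_span_pair.mp hmem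
  obtain ⟨a', ha', haf⟩ := exists_mem_intGrading_decompose_mul_eq hf a m
  obtain ⟨b', hb', hbg⟩ := exists_mem_intGrading_decompose_mul_eq hg b m
  refine ⟨a', ha', b', hb', ?_⟩
  rw [← haf, ← hbg, ← AddMemClass.coe_add, ← DirectSum.add_apply, ← DirectSum.decompose_add, hab,
    DirectSum.decompose_of_mem_same 𝒜 hh]

lemma det_mem_intGrading {p q r s : ℤ} {a b c d : A} (ha : a ∈ intGrading 𝒜 (p - r))
    (hb : b ∈ intGrading 𝒜 (p - s)) (hc : c ∈ intGrading 𝒜 (q - r))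
    (hd : d ∈ intGrading 𝒜 (q - s)) : a * d - b * c ∈ intGrading 𝒜 (p + q - (r + s)) := by
  have had := mul_mem_intGrading ha hd
  have hbc := mul_mem_intGrading hb hc
  rw [sub_add_sub_comm] at had hbc
  rw [add_comm s r] at hbc
  exact sub_mem had hbc

lemma det_mem_zero_of_det_ne_zero {p q r s : ℕ} {a b c d : A} (hr : 0 < r) (hs : 0 < s)
    (hdeg : p * q ≤ r * s) (ha : a ∈ intGrading 𝒜 (p - r)) (hb : b ∈ intGrading 𝒜 (p - s))
    (hc : c ∈ intGrading 𝒜 (q - r)) (hd : d ∈ intGrading 𝒜 (q - s))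
    (hdet : a * d - b * c ≠ 0) : a * d - b * c ∈ 𝒜 0 := by
  have hsum : p + q = r + s := by
    rcases le_and_le_of_det_ne_zero ha hb hc hd hdet with ⟨hrp, hsq⟩ | ⟨hsp, hrq⟩
    · obtain ⟨rfl, rfl⟩ := eq_and_eq_of_le_of_mul_le_mul hr hs hrp hsq hdeg
      rfl
    · obtain ⟨rfl, rfl⟩ :=
        eq_and_eq_of_le_of_mul_le_mul hs hr hsp hrq (hdeg.trans_eq (mul_comm r s))
      exact add_comm p q
  have hmem := det_mem_intGrading ha hb hc hd
  rwa [← Nat.cast_add, ← Nat.cast_add, hsum, sub_self] at hmem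

lemma span_ne_top_of_forall_mem_pos_degree [Nontrivial A] {S : Set A}
    (hS : ∀ x ∈ S, ∃ i, 0 < i ∧ x ∈ 𝒜 i) : Ideal.span S ≠ ⊤ := by
  have hle : Ideal.span S ≤ (HomogeneousIdeal.irrelevant 𝒜).toIdeal :=
    Ideal.span_le.mpr fun x hx =>
      let ⟨_, hi, hxi⟩ := hS x hx
      HomogeneousIdeal.mem_irrelevant_of_mem 𝒜 hi hxi
  exact ne_top_of_le_ne_top (RingHom.ker_ne_top (GradedRing.projZeroRingHom 𝒜)) hle

theorem stmt_8_general (hunit : ∀ u ∈ 𝒜 0, u ≠ 0 → IsUnit u) {f g f' g' : A}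
    {df dg df' dg' : ℕ} (hdf : 0 < df) (hdg : 0 < dg) (hf : f ∈ 𝒜 df) (hg : g ∈ 𝒜 dg)
    (hf' : f' ∈ 𝒜 df') (hg' : g' ∈ 𝒜 dg') (hreg' : Sequence.IsRegular A [f', g'])
    (hsub : Ideal.span {f', g'} ≤ Ideal.span {f, g}) (hdeg : df' * dg' ≤ df * dg) :
    Ideal.span {f', g'} = Ideal.span {f, g} := by
  have : Nontrivial A := hreg'.nontrivial
  have htop : Ideal.span {f, g} ≠ ⊤ := span_ne_top_of_forall_mem_pos_degree (𝒜 := 𝒜) <| by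
    rintro x (rfl | rfl)
    exacts [⟨df, hdf, hf⟩, ⟨dg, hdg, hg⟩]
  obtain ⟨hf'_mem, hg'_mem⟩ := Set.pair_subset_iff.mp (Ideal.span_le.mp hsub)
  obtain ⟨a, ha, b, hb, hab⟩ := exists_mem_intGrading_of_mem_span_pair hf hg hf' hf'_mem
  obtain ⟨c, hc, d, hd, hcd⟩ := exists_mem_intGrading_of_mem_span_pair hf hg hg' hg'_mem
  have hdet : a * d - b * c ≠ 0 :=
    det_ne_zero_of_isWeaklyRegular_pair hreg'.toIsWeaklyRegular hab hcd htop
  have hdet_mem : a * d - b * c ∈ 𝒜 0 := det_mem_zero_of_det_ne_zero hdf hdg hdeg ha hb hc hd hdet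
  exact hsub.antisymm (span_pair_le_span_pair_of_isUnit_det hab hcd (hunit _ hdet_mem hdet))

end Graded

lemma isUnit_of_isHomogeneous_zero {K τ : Type*} [Field K] {u : MvPolynomial τ K}
    (hu : u.IsHomogeneous 0) (hu0 : u ≠ 0) : IsUnit u := by
  rw [← totalDegree_zero_iff_isHomogeneous, totalDegree_eq_zero_iff_eq_C] at hu
  rw [hu, ne_eq, C_eq_zero] at hu0
  rw [hu]
  exact (isUnit_iff_ne_zero.mpr hu0).map C

/-- A height-two complete intersection contained in another one of the same degree is
equal to it. -/
theorem stmt_8 (f g f' g' : MvPolynomial (Fin (n+1)) k)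
    (df dg df' dg' : ℕ)
    (hdf : 0 < df) (hdg : 0 < dg) (hdf' : 0 < df') (hdg' : 0 < dg')
    (hfhom : MvPolynomial.IsHomogeneous f df) (hghom : MvPolynomial.IsHomogeneous g dg)
    (hfhom' : MvPolynomial.IsHomogeneous f' df') (hghom' : MvPolynomial.IsHomogeneous g' dg')
    (hreg : RingTheory.Sequence.IsRegular (MvPolynomial (Fin (n+1)) k) [f, g])
    (hreg' : RingTheory.Sequence.IsRegular (MvPolynomial (Fin (n+1)) k) [f', g'])
    (hsub : Ideal.span {f', g'} ≤ (Ideal.span {f, g} : Ideal (MvPolynomial (Fin (n+1)) k)))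
    (hdeg : df' * dg' = df * dg) :
    Ideal.span {f', g'} = (Ideal.span {f, g} : Ideal (MvPolynomial (Fin (n+1)) k)) := by
  let := gradedAlgebra (σ := Fin (n+1)) (R := k)
  exact stmt_8_general (𝒜 := homogeneousSubmodule (Fin (n+1)) k)
    (fun _ => isUnit_of_isHomogeneous_zero) hdf hdg hfhom hghom hfhom' hghom' hreg' hsub hdeg.le

end
end

section
/- Let I be an arithmetically Gorenstein homogeneous ideal of height three in R. If I contains a nonzero homogeneous element of degree 1, then I is a complete intersection. Equivalently, if I is not a complete intersection, then every nonzero homogeneous element of I has degree at least 2. -/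
/-
Common setup: `R = k[x₀,…,xₙ]` is the standard graded polynomial ring
`MvPolynomial (Fin (n+1)) k` over a field `k`.
-/

open CategoryTheory MvPolynomial RingTheory

noncomputable section

variable {k : Type} [Field k] {n : ℕ}

/-!
A linear form `ℓ ∈ I` can be eliminated: `R ⧸ (ℓ)` is a polynomial ring `S` in one variable less,
and it is enough to show that the image `J` of `I` in `S` is a complete intersection. By Rees,
`Ext_S^i(S ⧸ J, S) = Ext_R^{i+1}(R ⧸ I, R)`, so `Ext_S^2(S ⧸ J, S)` is cyclic and all higher ones
vanish. As `S ⧸ J` has finite projective dimension (Hilbert), this forces `pd (S ⧸ J) ≤ 2`.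

Let `0 → L → F → J → 0` with `F` free on a minimal set of generators, so that `L` is projective.
Then `F* → L* → Ext_S^1(J, S) = Ext_S^2(S ⧸ J, S) → 0` is exact, and by minimality the image of
`F*` lies in `𝔪 L*`. By Nakayama, `L*` is cyclic near the origin, so `L` has rank at most one and
`F` has rank at most two. Two generators of `J` are relatively prime because `I` has height three.
-/

universe u

section Syzygies

open scoped TensorProduct Polynomial

theorem shortExact_of_functionExact {A : Type u} [Ring A] {M N P : Type u} [AddCommGroup M]
    [Module A M] [AddCommGroup N] [Module A N] [AddCommGroup P] [Module A P]
    {f : M →ₗ[A] N} {g : N →ₗ[A] P} (hf : Function.Injective f) (hfg : Function.Exact f g)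
    (hg : Function.Surjective g) :
    (ModuleCat.shortComplexOfCompEqZero f g hfg.linearMap_comp_eq_zero).ShortExact :=
  ModuleCat.shortComplex_shortExact _ hfg hf hg

theorem hasProjectiveDimensionLE_zero_iff_projective {A : Type u} [Ring A] {M : Type u}
    [AddCommGroup M] [Module A M] :
    HasProjectiveDimensionLE (ModuleCat.of A M) 0 ↔ Module.Projective A M := by
  rw [← projective_iff_hasProjectiveDimensionLE_zero, ← IsProjective.iff_projective]

theorem hasProjectiveDimensionLE_baseChange {A : Type u} [CommRing A] (B : Type u) [CommRing B]
    [Algebra A B] [Module.Flat A B] {M : Type u} [AddCommGroup M] [Module A M] {d : ℕ}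
    (h : HasProjectiveDimensionLE (ModuleCat.of A M) d) :
    HasProjectiveDimensionLE (ModuleCat.of B (B ⊗[A] M)) d := by
  induction d generalizing M with
  | zero =>
    rw [hasProjectiveDimensionLE_zero_iff_projective] at h ⊢
    infer_instance
  | succ d ih =>
    let π : (M →₀ A) →ₗ[A] M := Finsupp.linearCombination A id
    have hπ : Function.Surjective π := Finsupp.linearCombination_id_surjective A M
    have hker : Function.Exact (LinearMap.ker π).subtype π := LinearMap.exact_subtype_ker_map π
    have hA := shortExact_of_functionExact (M := LinearMap.ker π)
      Subtype.val_injective hker hπ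
    have hB := shortExact_of_functionExact (f := (LinearMap.ker π).subtype.baseChange B)
      (g := π.baseChange B)
      (Module.Flat.lTensor_preserves_injective_linearMap _ Subtype.val_injective)
      (lTensor_exact (M := LinearMap.ker π) B hker hπ) (LinearMap.lTensor_surjective B hπ)
    exact (hB.hasProjectiveDimensionLT_X₃_iff d ((IsProjective.iff_projective _).1
      (inferInstanceAs (Module.Projective B (B ⊗[A] (M →₀ A)))))).2
      (ih ((hA.hasProjectiveDimensionLT_X₃_iff d ((IsProjective.iff_projective _).1
        (inferInstanceAs (Module.Projective A (M →₀ A))))).1 h))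

section PolynomialModule

variable (A M : Type u) [CommRing A] [AddCommGroup M] [Module A M] [Module A[X] M]
  [IsScalarTower A A[X] M]

/-- Multiplication by `X` on the `A[X]`-module `M`, as an `A`-linear map. -/
def smulX : M →ₗ[A] M := (LinearMap.lsmul A[X] M Polynomial.X).restrictScalars A

/-- The endomorphism `X ⊗ 1 - 1 ⊗ X` of `A[X] ⊗[A] M`; it resolves the `A[X]`-module `M`. -/
def charMap : A[X] ⊗[A] M →ₗ[A[X]] A[X] ⊗[A] M :=
  (Polynomial.X : A[X]) • LinearMap.id - (smulX A M).baseChange A[X]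

/-- The action of `A[X]` on `M`, as an `A[X]`-linear map. -/
def actionMap : A[X] ⊗[A] M →ₗ[A[X]] M := (LinearMap.id : M →ₗ[A] M).liftBaseChange A[X]

variable {A M}

theorem actionMap_tmul (p : A[X]) (m : M) : actionMap A M (p ⊗ₜ m) = p • m := by
  simp [actionMap]

theorem charMap_tmul (p : A[X]) (m : M) :
    charMap A M (p ⊗ₜ m) = (Polynomial.X * p) ⊗ₜ m - p ⊗ₜ ((Polynomial.X : A[X]) • m) := by
  simp [charMap, smulX, TensorProduct.smul_tmul']

theorem actionMap_comp_charMap : actionMap A M ∘ₗ charMap A M = 0 := by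
  refine TensorProduct.AlgebraTensorModule.ext fun p m ↦ ?_
  simp only [LinearMap.comp_apply, charMap_tmul, map_sub, actionMap_tmul, smul_smul,
    mul_comm p, sub_self, LinearMap.zero_apply]

theorem tmul_sub_one_tmul_smul_mem_range_charMap (p : A[X]) (m : M) :
    p ⊗ₜ[A] m - 1 ⊗ₜ[A] (p • m) ∈ LinearMap.range (charMap A M) := by
  induction p using Polynomial.induction_on generalizing m with
  | C a =>
    have : (Polynomial.C a : A[X]) = a • 1 := by simp [Polynomial.smul_eq_C_mul]
    rw [this, TensorProduct.smul_tmul, smul_assoc, one_smul, sub_self]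
    exact zero_mem _
  | add p q hp hq =>
    convert add_mem (hp m) (hq m) using 1
    rw [add_smul, TensorProduct.tmul_add, TensorProduct.add_tmul]
    abel
  | monomial i a ih =>
    convert add_mem (ih ((Polynomial.X : A[X]) • m)) (LinearMap.mem_range_self (charMap A M)
      ((Polynomial.C a * Polynomial.X ^ i) ⊗ₜ m)) using 1
    rw [charMap_tmul, smul_smul, pow_succ, ← mul_assoc, mul_comm Polynomial.X]
    abel

theorem exact_charMap_actionMap : Function.Exact (charMap A M) (actionMap A M) := by
  have sub_mem (t : A[X] ⊗[A] M) : t - 1 ⊗ₜ actionMap A M t ∈ LinearMap.range (charMap A M) := by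
    induction t with
    | zero => simp
    | add t u ht hu =>
      convert add_mem ht hu using 1
      rw [map_add, TensorProduct.tmul_add]
      abel
    | tmul p m => simpa only [actionMap_tmul] using tmul_sub_one_tmul_smul_mem_range_charMap p m
  refine fun t ↦ ⟨fun ht ↦ ?_, ?_⟩
  · rw [← LinearMap.coe_range, SetLike.mem_coe]
    simpa only [ht, TensorProduct.tmul_zero, sub_zero] using sub_mem t
  · rintro ⟨t, rfl⟩
    exact LinearMap.congr_fun actionMap_comp_charMap t

-- The top coefficient of an element of the kernel is the `X`-multiple of a zero coefficient.
theorem charMap_injective : Function.Injective (charMap A M) := by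
  let e := TensorProduct.equivFinsuppOfBasisLeft (N := M) (Polynomial.basisMonomials A)
  have coeff_tmul (p : A[X]) (m : M) (i : ℕ) : e (p ⊗ₜ m) i = p.coeff i • m := by
    simp [e]
    rfl
  have coeff_charMap (t : A[X] ⊗[A] M) (i : ℕ) :
      e (charMap A M t) (i + 1) = e t i - smulX A M (e t (i + 1)) := by
    induction t with
    | zero => simp
    | add t u ht hu => simp only [map_add, Finsupp.add_apply, ht, hu]; abel
    | tmul p m =>
      simp only [charMap_tmul, map_sub, Finsupp.sub_apply, coeff_tmul, Polynomial.coeff_X_mul,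
        map_smul]
      rfl
  refine (injective_iff_map_eq_zero _).2 fun t ht ↦ ?_
  by_contra hne
  have hsupp : (e t).support.Nonempty := by simpa using hne
  refine Finsupp.mem_support_iff.1 ((e t).support.max'_mem hsupp) ?_
  have hnext : e t ((e t).support.max' hsupp + 1) = 0 := by
    by_contra h
    have := (e t).support.le_max' _ (Finsupp.mem_support_iff.2 h)
    omega
  simpa [ht, hnext] using (coeff_charMap t ((e t).support.max' hsupp)).symm

theorem hasProjectiveDimensionLE_succ_polynomial {d : ℕ}
    (h : HasProjectiveDimensionLE (ModuleCat.of A M) d) :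
    HasProjectiveDimensionLE (ModuleCat.of A[X] M) (d + 1) := by
  have hsurj : Function.Surjective (actionMap A M) := fun m ↦ ⟨1 ⊗ₜ m, by simp [actionMap_tmul]⟩
  have hT := hasProjectiveDimensionLE_baseChange A[X] h
  exact (shortExact_of_functionExact charMap_injective exact_charMap_actionMap
    hsurj).hasProjectiveDimensionLT_X₃ (d + 1) hT
    (hasProjectiveDimensionLT_of_ge (ModuleCat.of A[X] (A[X] ⊗[A] M)) (d + 1) _ (by omega))

end PolynomialModule

theorem hasProjectiveDimensionLE_mvPolynomial (k : Type u) [Field k] (n : ℕ) (M : Type u)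
    [AddCommGroup M] [Module (MvPolynomial (Fin n) k) M] :
    HasProjectiveDimensionLE (ModuleCat.of (MvPolynomial (Fin n) k) M) n := by
  induction n generalizing M with
  | zero =>
    let := ((MvPolynomial.isEmptyRingEquiv k (Fin 0)).toMulEquiv.isField
      (Field.toIsField k)).toField
    rw [hasProjectiveDimensionLE_zero_iff_projective]
    infer_instance
  | succ n ih =>
    let e : (MvPolynomial (Fin n) k)[X] ≃+* MvPolynomial (Fin (n + 1)) k :=
      (MvPolynomial.finSuccEquiv k n).symm.toRingEquiv
    let : Module (MvPolynomial (Fin n) k)[X] M := Module.compHom M e.toRingHom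
    let : Module (MvPolynomial (Fin n) k) M := Module.compHom M Polynomial.C
    have : IsScalarTower (MvPolynomial (Fin n) k) (MvPolynomial (Fin n) k)[X] M :=
      ⟨fun a p m ↦ by
        change _ = Polynomial.C a • (p • m)
        rw [smul_smul, Polynomial.smul_eq_C_mul]⟩
    have := hasProjectiveDimensionLE_succ_polynomial (ih M)
    let := RingHomInvPair.of_ringEquiv e
    let := RingHomInvPair.of_ringEquiv e.symm
    let e' : M ≃ₛₗ[RingHomClass.toRingHom e] M :=
      { AddEquiv.refl M with map_smul' := fun _ _ ↦ rfl }
    exact ModuleCat.hasProjectiveDimensionLE_of_semiLinearEquiv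
      (M := ModuleCat.of (MvPolynomial (Fin n) k)[X] M)
      (N := ModuleCat.of (MvPolynomial (Fin (n + 1)) k) M) e e' (n + 1)

end Syzygies

section ExtComparison

variable {R : Type u} [CommRing R] {X Y : ModuleCat.{u} R}

theorem smul_extMk (P : ProjectiveResolution X) {i : ℕ} (r : R) (f : P.complex.X i ⟶ Y)
    (hf : P.complex.d (i + 1) i ≫ f = 0) :
    r • P.extMk f (i + 1) rfl hf = P.extMk (r • f) (i + 1) rfl (by simp [hf]) := by
  simp [Abelian.Ext.smul_eq_comp_mk₀, P.extMk_comp_mk₀]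

/-- Cocycles of `Hom(P, Y)` represent classes in `Ext X Y`. -/
def extMkLinearMap (P : ProjectiveResolution X) (Y : ModuleCat.{u} R) (i : ℕ) :
    LinearMap.ker ((P.complex.linearYonedaObj R Y).sc' i (i + 1) (i + 2)).g.hom →ₗ[R]
      Abelian.Ext X Y (i + 1) where
  toFun z := P.extMk (n := i + 1) z.1 (i + 2) rfl z.2
  map_add' z w := (P.add_extMk z.1 w.1 (i + 2) rfl z.2 w.2).symm
  map_smul' r z := (smul_extMk P r z.1 z.2).symm

theorem extMkLinearMap_surjective (P : ProjectiveResolution X) (i : ℕ) :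
    Function.Surjective (extMkLinearMap P Y i) := fun α ↦ by
  obtain ⟨f, hf, rfl⟩ := P.extMk_surjective α (i + 2) rfl
  exact ⟨⟨f, hf⟩, rfl⟩

theorem ker_extMkLinearMap (P : ProjectiveResolution X) (i : ℕ) :
    LinearMap.ker (extMkLinearMap P Y i) = LinearMap.range
      ((P.complex.linearYonedaObj R Y).sc' i (i + 1) (i + 2)).moduleCatToCycles := by
  ext z
  refine (P.extMk_eq_zero_iff z.1 (i + 2) rfl z.2 i rfl).trans ?_
  exact exists_congr fun g ↦ ⟨fun h ↦ Subtype.ext h, fun h ↦ congrArg Subtype.val h⟩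

theorem nonempty_ext_obj_linearEquiv (X Y : ModuleCat.{u} R) (i : ℕ) :
    Nonempty (((Ext R (ModuleCat R) (i + 1)).obj (Opposite.op X)).obj Y ≃ₗ[R]
      Abelian.Ext X Y (i + 1)) := by
  let P := projectiveResolution X
  let K := (P.complex.linearYonedaObj R Y).sc' i (i + 1) (i + 2)
  let e := P.isoExt (R := R) (i + 1) Y ≪≫
    (P.complex.linearYonedaObj R Y).homologyIsoSc' i (i + 1) (i + 2) (by simp) (by simp) ≪≫
    K.moduleCatHomologyIso
  exact ⟨e.toLinearEquiv ≪≫ₗ Submodule.quotEquivOfEq _ _ (ker_extMkLinearMap P i).symm ≪≫ₗ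
    (extMkLinearMap P Y i).quotKerEquivOfSurjective (extMkLinearMap_surjective P i)⟩

end ExtComparison

section Rees

open Abelian

variable {R S : Type u} [CommRing R] [CommRing S]

/-- The ring homomorphism `f` presents its target as the quotient by the nonzerodivisor `x`. -/
structure IsQuotientByRegular (f : R →+* S) (x : R) : Prop where
  surjective : Function.Surjective f
  ker_eq : RingHom.ker f = Ideal.span {x}
  isSMulRegular : IsSMulRegular R x

namespace IsQuotientByRegular

variable {f : R →+* S} {x : R}

theorem map_eq_zero_iff (h : IsQuotientByRegular f x) {r : R} : f r = 0 ↔ x ∣ r := by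
  rw [← RingHom.mem_ker, h.ker_eq, Ideal.mem_span_singleton]

theorem map_self (h : IsQuotientByRegular f x) : f x = 0 := h.map_eq_zero_iff.2 dvd_rfl

variable (f) in
/-- Reduction of coordinates `R^(ι) → S^(ι)`, as an `R`-linear map. -/
def reduceFinsupp (ι : Type u) :
    (ι →₀ R) →ₗ[R] (ModuleCat.restrictScalars f).obj (ModuleCat.of S (ι →₀ S)) where
  toFun v := v.mapRange f f.map_zero
  map_add' v w := Finsupp.mapRange_add f.map_add v w
  map_smul' r v := Finsupp.ext fun i ↦ f.map_mul r (v i)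

variable (f) in
/-- The ring homomorphism `f`, as an `R`-linear map. -/
def reduce : R →ₗ[R] (ModuleCat.restrictScalars f).obj (ModuleCat.of S S) where
  toFun := f
  map_add' := f.map_add
  map_smul' r s := f.map_mul r s

theorem exact_lsmul_reduce (h : IsQuotientByRegular f x) :
    Function.Exact (LinearMap.lsmul R R x) (reduce f) := fun _ ↦
  h.map_eq_zero_iff.trans (exists_congr fun _ ↦ eq_comm)

theorem shortExact_reduce (h : IsQuotientByRegular f x) :
    (ModuleCat.shortComplexOfCompEqZero _ _
      h.exact_lsmul_reduce.linearMap_comp_eq_zero).ShortExact :=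
  shortExact_of_functionExact (f := LinearMap.lsmul R R x) h.isSMulRegular h.exact_lsmul_reduce
    h.surjective

theorem exact_lsmul_reduceFinsupp (h : IsQuotientByRegular f x) (ι : Type u) :
    Function.Exact (LinearMap.lsmul R (ι →₀ R) x) (reduceFinsupp f ι) := by
  refine fun v ↦ ⟨fun hv ↦ ?_, ?_⟩
  · have hdvd (i : ι) : x ∣ v i := h.map_eq_zero_iff.1 (DFunLike.congr_fun (F := ι →₀ S) hv i)
    choose q hq using hdvd
    have hq_supp (i : ι) (hi : q i ≠ 0) : i ∈ v.support :=
      Finsupp.mem_support_iff.2 fun hv ↦ hi (h.isSMulRegular (by simp [← hq, hv]))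
    exact ⟨Finsupp.onFinset v.support q hq_supp, Finsupp.ext fun i ↦ (hq i).symm⟩
  · rintro ⟨w, rfl⟩
    exact Finsupp.ext fun i ↦ h.map_eq_zero_iff.2 (dvd_mul_right x (w i))

theorem shortExact_reduceFinsupp (h : IsQuotientByRegular f x) (ι : Type u) :
    (ModuleCat.shortComplexOfCompEqZero _ _
      (h.exact_lsmul_reduceFinsupp ι).linearMap_comp_eq_zero).ShortExact :=
  shortExact_of_functionExact (f := LinearMap.lsmul R (ι →₀ R) x)
    (fun _ _ hvw ↦ Finsupp.ext fun i ↦ h.isSMulRegular (DFunLike.congr_fun hvw i))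
    (h.exact_lsmul_reduceFinsupp ι) (Finsupp.mapRange_surjective f f.map_zero h.surjective)

/-- The class of `0 → R → R → S → 0` in `Ext¹(S, R)`. -/
def extClass (h : IsQuotientByRegular f x) :
    Ext ((ModuleCat.restrictScalars f).obj (ModuleCat.of S S)) (ModuleCat.of R R) 1 :=
  h.shortExact_reduce.extClass

/-- The map `Ext_S^n(N, S) → Ext_R^{n+1}(N, R)` of Rees' lemma. -/
def reesHom (h : IsQuotientByRegular f x) (N : ModuleCat.{u} S) (n : ℕ) :
    Ext N (ModuleCat.of S S) n →+
      Ext ((ModuleCat.restrictScalars f).obj N) (ModuleCat.of R R) (n + 1) :=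
  (h.extClass.postcomp _ rfl).comp ((ModuleCat.restrictScalars f).mapExtAddHom N _ n)

theorem reesHom_apply (h : IsQuotientByRegular f x) (N : ModuleCat.{u} S) {n : ℕ}
    (α : Ext N (ModuleCat.of S S) n) : h.reesHom N n α =
      (α.mapExactFunctor (ModuleCat.restrictScalars f)).comp h.extClass rfl := rfl

theorem reesHom_smul (h : IsQuotientByRegular f x) (N : ModuleCat.{u} S) {n : ℕ} (r : R)
    (α : Ext N (ModuleCat.of S S) n) : h.reesHom N n (f r • α) = r • h.reesHom N n α := by
  have hr : (ModuleCat.restrictScalars f).map (f r • 𝟙 N) =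
      r • 𝟙 ((ModuleCat.restrictScalars f).obj N) := by
    ext; rfl
  have hα : f r • α = (Ext.mk₀ (f r • 𝟙 N)).comp α (zero_add n) := by simp [Ext.mk₀_smul]
  rw [hα, reesHom_apply, Ext.mapExactFunctor_comp, Ext.mapExactFunctor_mk₀, hr]
  simp [Ext.mk₀_smul, reesHom_apply]

theorem reesHom_mk₀_comp (h : IsQuotientByRegular f x) {M N : ModuleCat.{u} S} (g : M ⟶ N) {n : ℕ}
    (α : Ext N (ModuleCat.of S S) n) :
    h.reesHom M n ((Ext.mk₀ g).comp α (zero_add n)) =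
      (Ext.mk₀ ((ModuleCat.restrictScalars f).map g)).comp (h.reesHom N n α)
        (zero_add (n + 1)) := by
  rw [reesHom_apply, Ext.mapExactFunctor_comp, Ext.mapExactFunctor_mk₀, reesHom_apply,
    Ext.comp_assoc _ _ _ (zero_add n) rfl (by omega)]

theorem reesHom_extClass_comp (h : IsQuotientByRegular f x) {T : ShortComplex (ModuleCat.{u} S)}
    (hT : T.ShortExact) {n : ℕ} (α : Ext T.X₁ (ModuleCat.of S S) n) :
    h.reesHom T.X₃ (n + 1) (hT.extClass.comp α (add_comm 1 n)) =
      (hT.map_of_exact (ModuleCat.restrictScalars f)).extClass.comp (h.reesHom T.X₁ n α)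
        (add_comm 1 (n + 1)) := by
  rw [reesHom_apply, Ext.mapExactFunctor_comp, Ext.mapExactFunctor_extClass _ hT, reesHom_apply]
  exact Ext.comp_assoc _ _ _ (add_comm 1 n) rfl (by omega)

theorem smul_restrictScalars_obj (h : IsQuotientByRegular f x) (N : ModuleCat.{u} S)
    (y : (ModuleCat.restrictScalars f).obj N) : x • y = 0 := by
  change f x • (show N from y) = 0
  rw [h.map_self, zero_smul]

theorem smul_ext_eq_zero (h : IsQuotientByRegular f x) (N : ModuleCat.{u} S) {Y : ModuleCat.{u} R}
    {n : ℕ} (α : Ext ((ModuleCat.restrictScalars f).obj N) Y n) : x • α = 0 := by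
  have hN : x • 𝟙 ((ModuleCat.restrictScalars f).obj N) = 0 := by
    ext y
    exact h.smul_restrictScalars_obj N y
  rw [← Ext.mk₀_id_comp α, ← Ext.smul_comp, ← Ext.mk₀_smul, hN, Ext.mk₀_zero, Ext.zero_comp]

theorem hom_self_eq_zero (h : IsQuotientByRegular f x) (N : ModuleCat.{u} S)
    (g : (ModuleCat.restrictScalars f).obj N ⟶ ModuleCat.of R R) : g = 0 := by
  ext y
  refine h.isSMulRegular ?_
  change x • g.hom y = x • 0
  rw [← map_smul, h.smul_restrictScalars_obj, map_zero, smul_zero]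

theorem full_restrictScalars (h : IsQuotientByRegular f x) :
    (ModuleCat.restrictScalars.{u} f).Full where
  map_surjective {M N} g := ⟨ModuleCat.ofHom
    { toFun := g.hom
      map_add' := g.hom.map_add
      map_smul' := fun s m ↦ by
        obtain ⟨r, rfl⟩ := h.surjective s
        exact g.hom.map_smul r m }, rfl⟩

-- From the long exact sequence of `0 → R → R → S → 0`: `Hom_R(N, R) = 0`, and `x` kills
-- `Ext¹_R(N, R)`.
theorem reesHom_zero_bijective (h : IsQuotientByRegular f x) (N : ModuleCat.{u} S) :
    Function.Bijective (h.reesHom N 0) := by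
  constructor
  · refine (injective_iff_map_eq_zero _).2 fun α hα ↦ ?_
    obtain ⟨φ, rfl⟩ := (Ext.mk₀_bijective _ _).2 α
    rw [reesHom_apply, Ext.mapExactFunctor_mk₀] at hα
    obtain ⟨β, hβ⟩ := Ext.covariant_sequence_exact₃ _ h.shortExact_reduce _ _ hα
    obtain ⟨g, rfl⟩ := (Ext.mk₀_bijective _ _).2 β
    rw [h.hom_self_eq_zero N g, Ext.mk₀_zero, Ext.zero_comp, eq_comm, Ext.mk₀_eq_zero_iff] at hβ
    rw [(ModuleCat.restrictScalars f).map_eq_zero_iff.1 hβ, Ext.mk₀_zero]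
  · intro β
    have hβ : β.comp (Ext.mk₀ (ModuleCat.ofHom (LinearMap.lsmul R R x))) (add_zero 1) = 0 := by
      have : ModuleCat.ofHom (LinearMap.lsmul R R x) = x • 𝟙 (ModuleCat.of R R) := by ext; simp
      rw [this, ← Ext.smul_eq_comp_mk₀, h.smul_ext_eq_zero]
    obtain ⟨α, rfl⟩ := Ext.covariant_sequence_exact₁ _ h.shortExact_reduce β hβ (zero_add 1)
    obtain ⟨g, rfl⟩ := (Ext.mk₀_bijective _ _).2 α
    obtain ⟨φ, rfl⟩ := h.full_restrictScalars.map_surjective (Y := ModuleCat.of S S) g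
    exact ⟨Ext.mk₀ φ, by rw [reesHom_apply, Ext.mapExactFunctor_mk₀]; rfl⟩

theorem subsingleton_ext_finsupp (h : IsQuotientByRegular f x) (ι : Type u) (Y : ModuleCat.{u} R)
    (n : ℕ) : Subsingleton (Ext ((ModuleCat.restrictScalars f).obj (ModuleCat.of S (ι →₀ S))) Y
      (n + 2)) := by
  have : Projective (ModuleCat.of R (ι →₀ R)) := (IsProjective.iff_projective _).1 inferInstance
  have := (h.shortExact_reduceFinsupp ι).hasProjectiveDimensionLT_X₃ 1
    (inferInstanceAs (HasProjectiveDimensionLT (ModuleCat.of R (ι →₀ R)) 1))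
    (hasProjectiveDimensionLT_of_ge (ModuleCat.of R (ι →₀ R)) 1 2 (by omega))
  exact HasProjectiveDimensionLT.subsingleton _ 2 _ (by omega) Y

theorem reesHom_bijective (h : IsQuotientByRegular f x) (N : ModuleCat.{u} S) (n : ℕ) :
    Function.Bijective (h.reesHom N n) := by
  induction n generalizing N with
  | zero => exact h.reesHom_zero_bijective N
  | succ n ih =>
    let F := ModuleCat.restrictScalars.{u} f
    let T := (Finsupp.linearCombination S (id : N → N)).shortComplexKer
    have hT : T.ShortExact :=
      LinearMap.shortExact_shortComplexKer (Finsupp.linearCombination_id_surjective S N)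
    have : Projective T.X₂ :=
      (IsProjective.iff_projective _).1 (inferInstanceAs (Module.Projective S (N →₀ S)))
    have := Ext.subsingleton_of_projective T.X₂ (ModuleCat.of S S) n
    have := h.subsingleton_ext_finsupp N (ModuleCat.of R R) n
    exact AddMonoidHom.bijective_of_surjective_of_bijective_of_right_exact
      ((Ext.mk₀ T.f).precomp _ (zero_add n)) (hT.extClass.precomp _ (add_comm 1 n))
      ((Ext.mk₀ (F.map T.f)).precomp _ (zero_add (n + 1)))
      ((hT.map_of_exact F).extClass.precomp _ (add_comm 1 (n + 1)))
      (h.reesHom T.X₂ n) (h.reesHom T.X₁ n) (h.reesHom T.X₃ (n + 1))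
      (by ext α; exact (h.reesHom_mk₀_comp T.f α).symm)
      (by ext α; exact (h.reesHom_extClass_comp hT α).symm)
      ((ShortComplex.ab_exact_iff_function_exact _).1
        (Ext.contravariant_sequence_exact₁' hT _ n (n + 1) (add_comm 1 n)))
      ((ShortComplex.ab_exact_iff_function_exact _).1
        (Ext.contravariant_sequence_exact₁' (hT.map_of_exact F) _ (n + 1) (n + 2)
          (add_comm 1 (n + 1))))
      (ih _).surjective (ih _)
      (fun α ↦ Ext.contravariant_sequence_exact₃ hT _ α (Subsingleton.elim _ _) (add_comm 1 n))
      (fun β ↦ Ext.contravariant_sequence_exact₃ (hT.map_of_exact F) _ β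
        (@Subsingleton.elim _ this _ _) (add_comm 1 (n + 1)))

theorem subsingleton_ext (h : IsQuotientByRegular f x) (N : ModuleCat.{u} S) (n : ℕ)
    [Subsingleton (Ext ((ModuleCat.restrictScalars f).obj N) (ModuleCat.of R R) (n + 1))] :
    Subsingleton (Ext N (ModuleCat.of S S) n) :=
  (h.reesHom_bijective N n).injective.subsingleton

theorem isPrincipal_ext (h : IsQuotientByRegular f x) (N : ModuleCat.{u} S) (n : ℕ)
    (hN : Module.IsPrincipal R
      (Ext ((ModuleCat.restrictScalars f).obj N) (ModuleCat.of R R) (n + 1))) :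
    Module.IsPrincipal S (Ext N (ModuleCat.of S S) n) := by
  obtain ⟨β, hβ⟩ := hN
  obtain ⟨α, rfl⟩ := (h.reesHom_bijective N n).surjective β
  refine ⟨α, eq_comm.1 (eq_top_iff.2 fun γ _ ↦ ?_)⟩
  obtain ⟨r, hr⟩ := Submodule.mem_span_singleton.1
    (hβ ▸ Submodule.mem_top : h.reesHom N n γ ∈ Submodule.span R {h.reesHom N n α})
  rw [← reesHom_smul] at hr
  exact Submodule.mem_span_singleton.2 ⟨f r, (h.reesHom_bijective N n).injective hr⟩

end IsQuotientByRegular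

end Rees

section ProjectiveDimension

open Abelian

variable {A : Type u} [CommRing A] {M : ModuleCat.{u} A}

theorem subsingleton_ext_pi_self {i : ℕ} [Subsingleton (Ext M (ModuleCat.of A A) i)] (m : ℕ) :
    Subsingleton (Ext M (ModuleCat.of A (Fin m → A)) i) := by
  refine subsingleton_of_forall_eq 0 fun α ↦ ?_
  have hid : 𝟙 (ModuleCat.of A (Fin m → A)) = ∑ j : Fin m,
      ModuleCat.ofHom (LinearMap.proj (R := A) (φ := fun _ ↦ A) j) ≫
        ModuleCat.ofHom (LinearMap.single A (fun _ ↦ A) j) := by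
    ext : 1
    simp only [ModuleCat.hom_sum, ModuleCat.hom_comp, ModuleCat.hom_id, ModuleCat.hom_ofHom]
    refine LinearMap.ext fun v ↦ ?_
    simp only [LinearMap.id_apply, LinearMap.sum_apply, LinearMap.comp_apply, LinearMap.proj_apply,
      LinearMap.single_apply, Finset.univ_sum_single]
  rw [← Ext.comp_mk₀_id α, hid, Ext.mk₀_sum, Ext.comp_sum]
  refine Finset.sum_eq_zero fun j _ ↦ ?_
  rw [← Ext.mk₀_comp_mk₀, ← Ext.comp_assoc α _ _ (add_zero i) (add_zero 0) (by omega),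
    Subsingleton.elim (α.comp _ (add_zero i)) 0, Ext.zero_comp]

variable [IsNoetherianRing A] [Module.Finite A M]

theorem hasProjectiveDimensionLT_of_succ {d : ℕ} [HasProjectiveDimensionLT M (d + 1)]
    [Subsingleton (Ext M (ModuleCat.of A A) d)] : HasProjectiveDimensionLT M d := by
  refine ModuleCat.hasProjectiveDimensionLT_of_forall_finite M d fun L _ ↦
    subsingleton_of_forall_eq 0 fun α ↦ ?_
  obtain ⟨m, π, hπ⟩ := Module.Finite.exists_fin' A L
  have hT := LinearMap.shortExact_shortComplexKer hπ
  obtain ⟨β, rfl⟩ := Ext.covariant_sequence_exact₃ M hT α rfl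
    (Ext.eq_zero_of_hasProjectiveDimensionLT _ (d + 1) le_rfl)
  have := subsingleton_ext_pi_self (M := M) (i := d) m
  rw [@Subsingleton.elim _ this β 0, Ext.zero_comp]

theorem hasProjectiveDimensionLT_of_forall_subsingleton_ext_self {d e : ℕ}
    (he : HasProjectiveDimensionLT M e)
    (h : ∀ i, d ≤ i → Subsingleton (Ext M (ModuleCat.of A A) i)) :
    HasProjectiveDimensionLT M d := by
  induction e with
  | zero => exact hasProjectiveDimensionLT_of_ge M 0 d (by omega)
  | succ e ih =>
    rcases le_or_gt d e with hde | hed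
    · have := h e hde
      have : HasProjectiveDimensionLT M e := hasProjectiveDimensionLT_of_succ
      exact ih this
    · exact hasProjectiveDimensionLT_of_ge M (e + 1) d (by omega)

end ProjectiveDimension

section Rank

variable {A : Type*} [CommRing A]

theorem mem_ideal_smul_top_dual {P : Type*} [AddCommGroup P] [Module A P] [Module.Finite A P]
    [Module.Projective A P] {𝔞 : Ideal A} {φ : Module.Dual A P} (hφ : ∀ p, φ p ∈ 𝔞) :
    φ ∈ 𝔞 • (⊤ : Submodule A (Module.Dual A P)) := by
  obtain ⟨n, f, g, -, -, hfg⟩ := Module.Finite.exists_comp_eq_id_of_projective A P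
  have hsum : φ = ∑ j, φ (f (Pi.single j 1)) • (LinearMap.proj j ∘ₗ g) := by
    conv_lhs => rw [← LinearMap.comp_id φ, ← hfg, ← LinearMap.comp_assoc]
    refine LinearMap.ext fun p ↦ ?_
    conv_lhs => rw [LinearMap.comp_apply, pi_eq_sum_univ' (g p), map_sum]
    simp only [map_smul, LinearMap.comp_apply, LinearMap.sum_apply, LinearMap.smul_apply,
      LinearMap.proj_apply, smul_eq_mul, mul_comm]
  rw [hsum]
  exact Submodule.sum_mem _ fun j _ ↦ Submodule.smul_mem_smul (hφ _) Submodule.mem_top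

variable {ι : Type*} [Finite ι] {Z : Submodule A (ι → A)} {𝔞 : Ideal A}

theorem range_dualRestrict_le_ideal_smul_top [Module.Finite A Z] [Module.Projective A Z]
    (hZ : ∀ z ∈ Z, ∀ i, z i ∈ 𝔞) :
    LinearMap.range Z.dualRestrict ≤ 𝔞 • (⊤ : Submodule A (Module.Dual A Z)) := by
  classical
  cases nonempty_fintype ι
  rintro _ ⟨φ, rfl⟩
  refine mem_ideal_smul_top_dual fun z ↦ ?_
  rw [Submodule.dualRestrict_apply, LinearMap.pi_apply_eq_sum_univ]
  exact Ideal.sum_mem _ fun i _ ↦ Ideal.mul_mem_right _ _ (hZ z z.2 i)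

-- By Nakayama, some `s ≠ 0` satisfies `s • Z* ⊆ A ζ`; applied to the coordinate functions of `Z`,
-- this shows that `ζ` is injective.
theorem injective_of_span_sup_range_dualRestrict_eq_top [IsDomain A] [Module.Finite A Z]
    [Module.Projective A Z] (h𝔞 : 𝔞 ≠ ⊤) (hZ : ∀ z ∈ Z, ∀ i, z i ∈ 𝔞) {ζ : Module.Dual A Z}
    (hζ : Submodule.span A {ζ} ⊔ LinearMap.range Z.dualRestrict = ⊤) :
    Function.Injective ζ := by
  obtain ⟨s, hs, hle⟩ := Submodule.exists_sub_one_mem_and_smul_le_of_fg_of_le_sup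
    (Module.Finite.fg_top (R := A) (M := Module.Dual A Z)) le_rfl
    (hζ.ge.trans (sup_le_sup_left (range_dualRestrict_le_ideal_smul_top hZ) _))
  have hs0 : s ≠ 0 := by
    rintro rfl
    exact h𝔞 ((Ideal.eq_top_iff_one 𝔞).2 (by simpa using 𝔞.neg_mem hs))
  refine (injective_iff_map_eq_zero ζ).2 fun z hz ↦ Subtype.ext (funext fun i ↦ ?_)
  obtain ⟨r, hr⟩ := Submodule.mem_span_singleton.1
    (hle (Submodule.smul_mem_pointwise_smul (Z.dualRestrict (LinearMap.proj i)) s _ trivial))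
  have hsz : s * z.1 i = r * ζ z := (LinearMap.congr_fun hr z).symm
  exact (mul_eq_zero.1 (hsz.trans (by rw [hz, mul_zero]))).resolve_left hs0

theorem card_le_two_of_injective_ker [IsDomain A] {ι : Type*} [Fintype ι] {J : Ideal A}
    {π : (ι → A) →ₗ[A] J} (hπ : Function.Surjective π) {ζ : Module.Dual A (LinearMap.ker π)}
    (hζ : Function.Injective ζ) : Fintype.card ι ≤ 2 := by
  have hker : Module.finrank A (LinearMap.ker π) ≤ 1 :=
    (LinearMap.finrank_le_finrank_of_injective hζ).trans_eq (Module.finrank_self A)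
  have hJ : Module.finrank A J ≤ 1 :=
    (LinearMap.finrank_le_finrank_of_injective J.injective_subtype).trans_eq
      (Module.finrank_self A)
  have hsum := (LinearMap.ker π).finrank_quotient_add_finrank
  rw [(π.quotKerEquivOfSurjective hπ).finrank_eq, Module.finrank_fintype_fun_eq_card] at hsum
  omega

end Rank

section Duality

open Abelian

variable {A : Type u} [CommRing A]

theorem exists_eq_smul_add_of_isPrincipal_ext {T : ShortComplex (ModuleCat.{u} A)}
    (hT : T.ShortExact) [Projective T.X₂] {Y : ModuleCat.{u} A} {i : ℕ}
    (h : Module.IsPrincipal A (Ext T.X₃ Y (i + 1))) :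
    ∃ α : Ext T.X₁ Y i, ∀ γ : Ext T.X₁ Y i, ∃ (r : A) (δ : Ext T.X₂ Y i),
      γ = r • α + (Ext.mk₀ T.f).comp δ (zero_add i) := by
  obtain ⟨β, hβ⟩ := h
  obtain ⟨α, rfl⟩ := Ext.contravariant_sequence_exact₃ hT Y β (Ext.eq_zero_of_projective _)
    (add_comm 1 i)
  refine ⟨α, fun γ ↦ ?_⟩
  obtain ⟨r, hr⟩ := Submodule.mem_span_singleton.1
    (hβ ▸ Submodule.mem_top : hT.extClass.comp γ (add_comm 1 i) ∈ Submodule.span A _)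
  obtain ⟨δ, hδ⟩ := Ext.contravariant_sequence_exact₁ hT Y (γ + (-r) • α) (add_comm 1 i)
    (by rw [Ext.comp_add, Ext.comp_smul, ← hr, neg_smul, add_neg_cancel])
  exact ⟨r, δ, by rw [hδ, neg_smul, add_comm γ, add_neg_cancel_left]⟩

theorem isPrincipal_ext_X₁ {T : ShortComplex (ModuleCat.{u} A)}
    (hT : T.ShortExact) [Projective T.X₂] {Y : ModuleCat.{u} A} {i : ℕ}
    (h : Module.IsPrincipal A (Ext T.X₃ Y (i + 2))) :
    Module.IsPrincipal A (Ext T.X₁ Y (i + 1)) := by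
  obtain ⟨α, hα⟩ := exists_eq_smul_add_of_isPrincipal_ext hT h
  refine ⟨α, eq_comm.1 (eq_top_iff.2 fun γ _ ↦ ?_)⟩
  obtain ⟨r, δ, rfl⟩ := hα γ
  rw [Ext.eq_zero_of_projective δ, Ext.comp_zero, add_zero]
  exact Submodule.smul_mem _ r (Submodule.mem_span_singleton_self α)

theorem shortExact_ideal (J : Ideal A) :
    (ModuleCat.shortComplexOfCompEqZero (M := J) J.subtype J.mkQ
      (LinearMap.exact_subtype_mkQ J).linearMap_comp_eq_zero).ShortExact :=
  shortExact_of_functionExact (M := J) J.injective_subtype (LinearMap.exact_subtype_mkQ J)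
    J.mkQ_surjective

variable {J : Ideal A} {P : Type u} [AddCommGroup P] [Module A P] [Module.Projective A P]
  {π : P →ₗ[A] J}

theorem projective_ker_of_hasProjectiveDimensionLE_two (hπ : Function.Surjective π)
    (h : HasProjectiveDimensionLE (ModuleCat.of A (A ⧸ J)) 2) :
    Module.Projective A (LinearMap.ker π) := by
  rw [← hasProjectiveDimensionLE_zero_iff_projective]
  refine ((LinearMap.shortExact_shortComplexKer hπ).hasProjectiveDimensionLT_X₃_iff 0
    (inferInstanceAs (Projective (ModuleCat.of A P)))).1 ?_
  exact ((shortExact_ideal J).hasProjectiveDimensionLT_X₃_iff 1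
    (inferInstanceAs (Projective (ModuleCat.of A A)))).1 h

theorem exists_span_sup_range_dualRestrict_eq_top (hπ : Function.Surjective π)
    (h : Module.IsPrincipal A (Ext (ModuleCat.of A (A ⧸ J)) (ModuleCat.of A A) 2)) :
    ∃ ζ : Module.Dual A (LinearMap.ker π),
      Submodule.span A {ζ} ⊔ LinearMap.range (LinearMap.ker π).dualRestrict = ⊤ := by
  have : Projective (ModuleCat.of A A) := inferInstance
  have : Projective π.shortComplexKer.X₂ := inferInstanceAs (Projective (ModuleCat.of A P))
  obtain ⟨α, hα⟩ := exists_eq_smul_add_of_isPrincipal_ext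
    (LinearMap.shortExact_shortComplexKer hπ) (isPrincipal_ext_X₁ (shortExact_ideal J) h)
  obtain ⟨ζ, rfl⟩ := (Ext.mk₀_bijective _ _).2 α
  refine ⟨ζ.hom, eq_top_iff.2 fun ψ _ ↦ ?_⟩
  obtain ⟨r, δ, hδ⟩ := hα (Ext.mk₀ (ModuleCat.ofHom ψ))
  obtain ⟨g, rfl⟩ := (Ext.mk₀_bijective _ _).2 δ
  rw [Ext.mk₀_comp_mk₀, ← Ext.mk₀_smul, ← Ext.mk₀_add] at hδ
  have hψ : ψ = r • ζ.hom + (LinearMap.ker π).dualRestrict g.hom :=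
    congrArg ModuleCat.Hom.hom ((Ext.mk₀_bijective _ _).1 hδ)
  exact Submodule.mem_sup.2 ⟨_, Submodule.mem_span_singleton.2 ⟨r, rfl⟩, _, ⟨g.hom, rfl⟩, hψ.symm⟩

theorem card_le_two_of_isPrincipal_ext [IsDomain A] [IsNoetherianRing A] {ι : Type u}
    [Fintype ι] {𝔞 : Ideal A} {π : (ι → A) →ₗ[A] J} (hπ : Function.Surjective π)
    (h𝔞 : 𝔞 ≠ ⊤) (hπ𝔞 : ∀ z ∈ LinearMap.ker π, ∀ i, z i ∈ 𝔞)
    (hpd : HasProjectiveDimensionLE (ModuleCat.of A (A ⧸ J)) 2)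
    (hext : Module.IsPrincipal A (Ext (ModuleCat.of A (A ⧸ J)) (ModuleCat.of A A) 2)) :
    Fintype.card ι ≤ 2 := by
  have := projective_ker_of_hasProjectiveDimensionLE_two hπ hpd
  obtain ⟨ζ, hζ⟩ := exists_span_sup_range_dualRestrict_eq_top hπ hext
  exact card_le_two_of_injective_ker hπ
    (injective_of_span_sup_range_dualRestrict_eq_top h𝔞 hπ𝔞 hζ)

end Duality

section MinimalGenerators

theorem exists_finset_span_eq_forall_notMem_span_diff {A M : Type*} [Semiring A] [AddCommMonoid M]
    [Module A M] [IsNoetherian A M] (T : Set M) :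
    ∃ s : Finset M, (s : Set M) ⊆ T ∧ Submodule.span A s = Submodule.span A T ∧
      ∀ p ∈ s, p ∉ Submodule.span A ((s : Set M) \ {p}) := by
  classical
  obtain ⟨s₀, hs₀, hspan₀⟩ := (Submodule.fg_span_iff_fg_span_finset_subset T).1
    (IsNoetherian.noetherian (Submodule.span A T))
  obtain ⟨s, ⟨hsT, hspan⟩, hmin⟩ := exists_minimal_of_wellFoundedLT
    (fun s : Finset M ↦ (s : Set M) ⊆ T ∧ Submodule.span A s = Submodule.span A T)
    ⟨s₀, hs₀, hspan₀.symm⟩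
  refine ⟨s, hsT, hspan, fun p hp hmem ↦ ?_⟩
  have herase : Submodule.span A (s.erase p : Set M) = Submodule.span A T := by
    rw [← hspan, Finset.coe_erase, ← Submodule.span_insert_eq_span hmem, Set.insert_sdiff_singleton,
      Set.insert_eq_of_mem (Finset.mem_coe.2 hp)]
  have hsub : (s.erase p : Set M) ⊆ T := fun q hq ↦ hsT (Finset.mem_of_mem_erase hq)
  exact Finset.notMem_erase p s (hmin ⟨hsub, herase⟩ (Finset.erase_subset p s) hp)

variable {σ R : Type*} [CommRing R]

theorem homogeneousComponent_mul_of_isHomogeneous {p : MvPolynomial σ R} {d : ℕ}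
    (hp : p.IsHomogeneous d) (z : MvPolynomial σ R) :
    homogeneousComponent d (z * p) = C (constantCoeff z) * p := by
  let : GradedRing (homogeneousSubmodule σ R) := gradedAlgebra
  have h := DirectSum.coe_decompose_mul_of_right_mem_of_le (homogeneousSubmodule σ R) (a := z)
    ((mem_homogeneousSubmodule d p).2 hp) le_rfl
  rw [Nat.sub_self] at h
  have hdecompose (i : ℕ) (q : MvPolynomial σ R) :
      (DirectSum.decompose (homogeneousSubmodule σ R) q i : MvPolynomial σ R) =
        homogeneousComponent i q := decomposition.decompose'_apply q i
  rw [hdecompose, hdecompose, homogeneousComponent_zero] at h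
  exact h

theorem homogeneousComponent_mem_span {T : Set (MvPolynomial σ R)}
    (hT : ∀ p ∈ T, ∃ d, p.IsHomogeneous d) {p : MvPolynomial σ R} (hp : p ∈ Ideal.span T) (d : ℕ) :
    homogeneousComponent d p ∈ Ideal.span T := by
  let : GradedRing (homogeneousSubmodule σ R) := gradedAlgebra
  exact homogeneousComponent_mem_of_mem (Ideal.homogeneous_span _ T hT) hp d

variable {k : Type*} [Field k]

theorem constantCoeff_eq_zero_of_mul_mem_span {T : Set (MvPolynomial σ k)}
    (hT : ∀ p ∈ T, ∃ d, p.IsHomogeneous d) {p z : MvPolynomial σ k} {d : ℕ}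
    (hp : p.IsHomogeneous d) (hpT : p ∉ Ideal.span T) (hz : z * p ∈ Ideal.span T) :
    constantCoeff z = 0 := by
  by_contra hne
  have hmem := homogeneousComponent_mem_span hT hz d
  rw [homogeneousComponent_mul_of_isHomogeneous hp, ← smul_eq_C_mul] at hmem
  exact hpT ((Submodule.smul_mem_iff ((Ideal.span T).restrictScalars k) hne).1 hmem)

theorem pos_of_isHomogeneous_of_mem {J : Ideal (MvPolynomial σ k)} (hJ : J ≠ ⊤)
    {p : MvPolynomial σ k} (hpJ : p ∈ J) (hp0 : p ≠ 0) {d : ℕ} (hp : p.IsHomogeneous d) :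
    0 < d := by
  refine Nat.pos_of_ne_zero ?_
  rintro rfl
  have hC : p = C (coeff 0 p) :=
    totalDegree_eq_zero_iff_eq_C.1 ((totalDegree_zero_iff_isHomogeneous σ).2 hp)
  have hunit : IsUnit (coeff 0 p) := isUnit_iff_ne_zero.2 fun h ↦ hp0 (by rw [hC, h, C_0])
  exact hJ (Ideal.eq_top_of_isUnit_mem J hpJ (hC ▸ hunit.map C))

variable {s : Finset (MvPolynomial σ k)}

theorem constantCoeff_eq_zero_of_linearCombination_eq_zero
    (hs : ∀ p ∈ s, ∃ d, p.IsHomogeneous d) (hmin : ∀ p ∈ s, p ∉ Ideal.span ((s : Set _) \ {p}))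
    {z : s → MvPolynomial σ k} (hz : ∑ p, z p * p = 0) (p : s) : constantCoeff (z p) = 0 := by
  classical
  obtain ⟨d, hd⟩ := hs p p.2
  refine constantCoeff_eq_zero_of_mul_mem_span (fun q hq ↦ hs q hq.1) hd (hmin p p.2) ?_
  rw [← Finset.add_sum_erase _ _ (Finset.mem_univ p)] at hz
  rw [eq_neg_of_add_eq_zero_left hz]
  refine neg_mem (Ideal.sum_mem _ fun q hq ↦ Ideal.mul_mem_left _ _ (Ideal.subset_span
    ⟨q.2, fun hqp ↦ Finset.ne_of_mem_erase hq (Subtype.ext hqp)⟩))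

end MinimalGenerators

section Gorenstein

open Abelian

variable {σ k : Type*} [Finite σ] [Field k]

theorem exists_length_le_two_ofList_eq {J : Ideal (MvPolynomial σ k)} (hJ : J ≠ ⊤)
    {T : Set (MvPolynomial σ k)} (hT : ∀ p ∈ T, ∃ d, p.IsHomogeneous d) (hJT : Ideal.span T = J)
    (hpd : HasProjectiveDimensionLE
      (ModuleCat.of (MvPolynomial σ k) (MvPolynomial σ k ⧸ J)) 2)
    (hext : Module.IsPrincipal (MvPolynomial σ k)
      (Ext (ModuleCat.of (MvPolynomial σ k) (MvPolynomial σ k ⧸ J))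
        (ModuleCat.of (MvPolynomial σ k) (MvPolynomial σ k)) 2)) :
    ∃ l : List (MvPolynomial σ k), l.length ≤ 2 ∧ Ideal.ofList l = J ∧ (∀ p ∈ l, p ≠ 0) ∧
      ∀ p ∈ l, ∃ d, 0 < d ∧ p.IsHomogeneous d := by
  obtain ⟨s, hsT, hspan, hmin⟩ :=
    exists_finset_span_eq_forall_notMem_span_diff (A := MvPolynomial σ k) T
  have hs (p) (hp : p ∈ s) : ∃ d, p.IsHomogeneous d := hT p (hsT hp)
  have hsJ : Ideal.span (s : Set _) = J := hspan.trans hJT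
  let π₀ := Fintype.linearCombination (MvPolynomial σ k) ((↑) : s → MvPolynomial σ k)
  have hrange : LinearMap.range π₀ = J := by
    rw [Fintype.range_linearCombination, Subtype.range_coe]
    exact hsJ
  let π := π₀.codRestrict J fun z ↦ hrange ▸ LinearMap.mem_range_self _ z
  have hπ : Function.Surjective π := by
    rw [← LinearMap.range_eq_top, LinearMap.range_codRestrict, hrange, Submodule.comap_subtype_self]
  have hcard : s.card ≤ 2 := by
    rw [← Fintype.card_coe]
    refine card_le_two_of_isPrincipal_ext hπ (RingHom.ker_ne_top constantCoeff)
      (fun z hz p ↦ ?_) hpd hext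
    exact constantCoeff_eq_zero_of_linearCombination_eq_zero hs hmin
      (congrArg Subtype.val (LinearMap.mem_ker.1 hz)) p
  have hs0 (p) (hp : p ∈ s) : p ≠ 0 := fun h ↦ hmin p hp (h ▸ zero_mem _)
  refine ⟨s.toList, (Finset.length_toList s).trans_le hcard,
    (congrArg Ideal.span (Set.ext fun _ ↦ Finset.mem_toList)).trans hsJ,
    fun p hp ↦ hs0 p (Finset.mem_toList.1 hp), fun p hp ↦ ?_⟩
  rw [Finset.mem_toList] at hp
  obtain ⟨d, hd⟩ := hs p hp
  exact ⟨d, pos_of_isHomogeneous_of_mem hJ (hsJ ▸ Ideal.subset_span hp) (hs0 p hp) hd, hd⟩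

end Gorenstein

section Elimination

theorem ker_eq_of_forall_X_sub_mem {R τ B : Type*} [CommRing R] [CommRing B] [Algebra R B]
    {φ : MvPolynomial τ R →ₐ[R] B} (σ : B →ₐ[R] MvPolynomial τ R)
    {I : Ideal (MvPolynomial τ R)} (hI : I ≤ RingHom.ker φ) (hX : ∀ j, X j - σ (φ (X j)) ∈ I) :
    RingHom.ker φ = I := by
  refine le_antisymm (fun p hp ↦ ?_) hI
  have hcongr : Ideal.Quotient.mkₐ R I = (Ideal.Quotient.mkₐ R I).comp (σ.comp φ) :=
    algHom_ext fun j ↦ Ideal.Quotient.eq.2 (hX j)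
  have hmk : Ideal.Quotient.mk I p = Ideal.Quotient.mk I (σ (φ p)) := DFunLike.congr_fun hcongr p
  rwa [RingHom.mem_ker.1 hp, map_zero, map_zero, Ideal.Quotient.eq_zero_iff_mem] at hmk

variable {k : Type*} [Field k] {n : ℕ}

theorem exists_eq_smul_X_add_rename_succAbove {l : MvPolynomial (Fin (n + 1)) k}
    (hl : l.IsHomogeneous 1) (hl0 : l ≠ 0) :
    ∃ (i : Fin (n + 1)) (c : k) (m : MvPolynomial (Fin n) k), c ≠ 0 ∧ m.IsHomogeneous 1 ∧
      l = c • X i + rename i.succAbove m := by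
  obtain ⟨c, rfl⟩ := (Submodule.mem_span_range_iff_exists_fun k).1
    (homogeneousSubmodule_one_eq_span_X (R := k) ▸ hl :
      l ∈ Submodule.span k (Set.range X))
  obtain ⟨i, hi⟩ : ∃ i, c i ≠ 0 := by
    by_contra! hc
    exact hl0 (Finset.sum_eq_zero fun i _ ↦ by rw [hc i, zero_smul])
  refine ⟨i, c i, ∑ j, c (i.succAbove j) • X j, hi, ?_, ?_⟩
  · exact Submodule.sum_mem (homogeneousSubmodule (Fin n) k 1) fun j _ ↦
      Submodule.smul_mem _ _ (isHomogeneous_X k j)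
  · rw [Fin.sum_univ_succAbove _ i, map_sum]
    simp only [map_smul, rename_X]

theorem exists_algHom_section_ker_eq_span {l : MvPolynomial (Fin (n + 1)) k}
    (hl : l.IsHomogeneous 1) (hl0 : l ≠ 0) :
    ∃ (φ : MvPolynomial (Fin (n + 1)) k →ₐ[k] MvPolynomial (Fin n) k)
      (σ : MvPolynomial (Fin n) k →ₐ[k] MvPolynomial (Fin (n + 1)) k),
      (∀ q, φ (σ q) = q) ∧ RingHom.ker φ = Ideal.span {l} ∧
      (∀ {p d}, p.IsHomogeneous d → (φ p).IsHomogeneous d) ∧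
      ∀ {q d}, q.IsHomogeneous d → (σ q).IsHomogeneous d := by
  obtain ⟨i, c, m, hc, hm, rfl⟩ := exists_eq_smul_X_add_rename_succAbove hl hl0
  let v : Fin (n + 1) → MvPolynomial (Fin n) k := i.insertNth (-(c⁻¹ • m)) X
  have hvi : v i = -(c⁻¹ • m) := Fin.insertNth_apply_same _ _ _
  have hvj (j : Fin n) : v (i.succAbove j) = X j := Fin.insertNth_apply_succAbove _ _ _ _
  have hv (j : Fin (n + 1)) : (v j).IsHomogeneous 1 := by
    rcases Fin.eq_self_or_eq_succAbove i j with rfl | ⟨j, rfl⟩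
    · rw [hvi]
      exact (Submodule.smul_mem (homogeneousSubmodule (Fin n) k 1) c⁻¹ hm).neg
    · rw [hvj]
      exact isHomogeneous_X k j
  have hφσ (q : MvPolynomial (Fin n) k) : aeval v (rename i.succAbove q) = q := by
    rw [aeval_rename, show v ∘ i.succAbove = X from funext hvj, aeval_X_left_apply]
  refine ⟨aeval v, rename i.succAbove, hφσ,
    ker_eq_of_forall_X_sub_mem (rename i.succAbove) ?_ fun j ↦ ?_,
    fun hp ↦ ?_, fun hq ↦ hq.rename_isHomogeneous⟩
  · rw [Ideal.span_singleton_le_iff_mem, RingHom.mem_ker, map_add, map_smul, aeval_X, hvi, hφσ,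
      smul_neg, smul_inv_smul₀ hc, neg_add_cancel]
  · rw [aeval_X]
    rcases Fin.eq_self_or_eq_succAbove i j with rfl | ⟨j, rfl⟩
    · have hX : X j - rename j.succAbove (v j) = C c⁻¹ * (c • X j + rename j.succAbove m) := by
        rw [hvi, map_neg, map_smul, sub_neg_eq_add, ← smul_eq_C_mul, smul_add, inv_smul_smul₀ hc]
      rw [hX]
      exact Ideal.mul_mem_left _ _ (Ideal.mem_span_singleton_self _)
    · rw [hvj, rename_X, sub_self]
      exact zero_mem _
  · simpa only [one_mul] using hp.aeval v hv

end Elimination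

section RegularSequence

open Sequence
open scoped Pointwise

variable {R S : Type u} [CommRing R] [CommRing S] {f : R →+* S} {x : R}

namespace IsQuotientByRegular

theorem isRegular_cons (h : IsQuotientByRegular f x) {rs : List R}
    (hrs : IsRegular S (rs.map f)) : IsRegular R (x :: rs) := by
  refine (isRegular_cons_iff R x rs).2 ⟨h.isSMulRegular, ?_⟩
  have hker : x • (⊤ : Submodule R R) = LinearMap.ker (reduce f) := by
    rw [h.exact_lsmul_reduce.linearMap_ker_eq]
    exact Submodule.map_top _
  let e : QuotSMulTop x R ≃ₗ[R] (ModuleCat.restrictScalars f).obj (ModuleCat.of S S) :=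
    Submodule.quotEquivOfEq _ _ hker ≪≫ₗ (reduce f).quotKerEquivOfSurjective h.surjective
  refine (AddEquiv.isRegular_congr (M₂ := S) (e := e.toAddEquiv) (bs := rs.map f) ?_).2 hrs
  exact List.forall₂_map_right_iff.2 (List.forall₂_same.2 fun r _ ↦ map_smul e r)

theorem comap_map_eq_self (h : IsQuotientByRegular f x) {I : Ideal R} (hx : x ∈ I) :
    (I.map f).comap f = I := by
  rw [Ideal.comap_map_of_surjective' f h.surjective, h.ker_eq, sup_eq_left,
    Ideal.span_singleton_le_iff_mem]
  exact hx

theorem comap_eq_span_sup_map (h : IsQuotientByRegular f x) {σ : S →+* R}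
    (hσ : ∀ q, f (σ q) = q) (J : Ideal S) : J.comap f = Ideal.span {x} ⊔ J.map σ := by
  have hJ : (J.map σ).map f = J := by
    rw [Ideal.map_map, show f.comp σ = RingHom.id S from RingHom.ext hσ, Ideal.map_id]
  rw [← h.ker_eq, sup_comm, ← Ideal.comap_map_of_surjective' f h.surjective, hJ]

theorem height_comap_span_singleton_le_two [IsNoetherianRing R] (h : IsQuotientByRegular f x)
    {d : S} (hd : ¬IsUnit d) : ((Ideal.span {d}).comap f).height ≤ 2 := by
  obtain ⟨d, rfl⟩ := h.surjective d
  have hspan : (Ideal.span {f d}).comap f = Ideal.span {d, x} := by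
    rw [← Set.image_singleton, ← Ideal.map_span, Ideal.comap_map_of_surjective' f h.surjective,
      h.ker_eq, ← Ideal.span_union, Set.singleton_union]
  have hne : (Ideal.span {f d}).comap f ≠ ⊤ := fun h ↦
    hd (Ideal.span_singleton_eq_top.1 (Ideal.comap_eq_top_iff.1 h))
  refine (Ideal.height_le_spanFinrank _ hne).trans ?_
  rw [hspan]
  exact (Submodule.spanFinrank_span_le_encard _).trans (by
    simpa only [Set.encard_singleton, one_add_one_eq_two] using Set.encard_insert_le {x} d)

theorem isRelPrime_of_two_lt_height [IsNoetherianRing R] (h : IsQuotientByRegular f x) {a b : S}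
    (hab : 2 < ((Ideal.span {a, b}).comap f).height) : IsRelPrime a b := by
  intro d hda hdb
  by_contra hd
  have hle : Ideal.span {a, b} ≤ Ideal.span {d} :=
    Ideal.span_le.2 (Set.pair_subset (Ideal.mem_span_singleton.2 hda)
      (Ideal.mem_span_singleton.2 hdb))
  exact hab.not_ge ((Ideal.height_mono (Ideal.comap_mono hle)).trans
    (h.height_comap_span_singleton_le_two hd))

end IsQuotientByRegular

theorem isWeaklyRegular_pair_of_isRelPrime [IsDomain S] [DecompositionMonoid S] {a b : S}
    (ha : a ≠ 0) (hab : IsRelPrime a b) : IsWeaklyRegular S [a, b] := by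
  refine (isWeaklyRegular_cons_iff S a [b]).2 ⟨IsSMulRegular.of_ne_zero ha,
    (isWeaklyRegular_singleton_iff _ b).2
      ((isSMulRegular_quotient_iff_mem_of_smul_mem _ b).2 fun c hc ↦ ?_)⟩
  rw [← Submodule.ideal_span_singleton_smul, smul_eq_mul, Ideal.mul_top,
    Ideal.mem_span_singleton] at hc ⊢
  exact hab.dvd_of_dvd_mul_left hc

theorem IsQuotientByRegular.isRegular_of_length_le_two [IsNoetherianRing R] [IsDomain S]
    [DecompositionMonoid S] (h : IsQuotientByRegular f x) {l : List S} (hl : l.length ≤ 2)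
    (hl0 : ∀ a ∈ l, a ≠ 0) (hltop : Ideal.ofList l ≠ ⊤)
    (hht : 2 < ((Ideal.ofList l).comap f).height) : IsRegular S l := by
  refine ⟨?_, by rwa [smul_eq_mul, Ideal.mul_top, ne_comm]⟩
  match l with
  | [] => exact IsWeaklyRegular.nil S S
  | [a] =>
    exact (isWeaklyRegular_singleton_iff S a).2 (IsSMulRegular.of_ne_zero (hl0 a (by simp)))
  | [a, b] =>
    refine isWeaklyRegular_pair_of_isRelPrime (hl0 a (by simp)) (h.isRelPrime_of_two_lt_height ?_)
    rwa [Ideal.ofList_cons, Ideal.ofList_singleton, ← Ideal.span_insert] at hht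
  | _ :: _ :: _ :: _ => simp at hl

end RegularSequence

section QuotientExt

variable {R S : Type u} [CommRing R] [CommRing S] {f : R →+* S} {x : R}

namespace IsQuotientByRegular

/-- If `x ∈ I`, then `R ⧸ I` and `S ⧸ IS` are the same `R`-module. -/
def quotientLinearEquiv (h : IsQuotientByRegular f x) {I : Ideal R} (hx : x ∈ I) :
    (R ⧸ I) ≃ₗ[R] (ModuleCat.restrictScalars f).obj (ModuleCat.of S (S ⧸ I.map f)) :=
  let π := ((ModuleCat.restrictScalars f).map (ModuleCat.ofHom (I.map f).mkQ)).hom ∘ₗ reduce f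
  have hπ : I = LinearMap.ker π :=
    (h.comap_map_eq_self hx).symm.trans
      (Ideal.ext fun _ ↦ (Submodule.Quotient.mk_eq_zero (I.map f)).symm)
  Submodule.quotEquivOfEq _ _ hπ ≪≫ₗ π.quotKerEquivOfSurjective
    (Ideal.Quotient.mk_surjective.comp h.surjective)

theorem nonempty_ext_obj_quotient_linearEquiv (h : IsQuotientByRegular f x) {I : Ideal R}
    (hx : x ∈ I) (i : ℕ) :
    Nonempty (((Ext R (ModuleCat R) (i + 1)).obj (Opposite.op (ModuleCat.of R (R ⧸ I)))).obj
      (ModuleCat.of R R) ≃ₗ[R] Abelian.Ext ((ModuleCat.restrictScalars f).obj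
        (ModuleCat.of S (S ⧸ I.map f))) (ModuleCat.of R R) (i + 1)) := by
  let e := ((Ext R (ModuleCat.{u} R) (i + 1)).mapIso (h.quotientLinearEquiv hx).toModuleIso.op).app
    (ModuleCat.of R R)
  exact (nonempty_ext_obj_linearEquiv _ _ i).map e.symm.toLinearEquiv.trans

theorem subsingleton_ext_quotient_map (h : IsQuotientByRegular f x) {I : Ideal R} (hx : x ∈ I)
    {i : ℕ} (hI : Subsingleton (((Ext R (ModuleCat R) (i + 1)).obj
      (Opposite.op (ModuleCat.of R (R ⧸ I)))).obj (ModuleCat.of R R))) :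
    Subsingleton (Abelian.Ext (ModuleCat.of S (S ⧸ I.map f)) (ModuleCat.of S S) i) := by
  obtain ⟨e⟩ := h.nonempty_ext_obj_quotient_linearEquiv hx i
  have := e.symm.subsingleton
  exact h.subsingleton_ext _ i

theorem isPrincipal_ext_quotient_map (h : IsQuotientByRegular f x) {I : Ideal R} (hx : x ∈ I)
    {i : ℕ} (hI : Module.IsPrincipal R (((Ext R (ModuleCat R) (i + 1)).obj
      (Opposite.op (ModuleCat.of R (R ⧸ I)))).obj (ModuleCat.of R R))) :
    Module.IsPrincipal S
      (Abelian.Ext (ModuleCat.of S (S ⧸ I.map f)) (ModuleCat.of S S) i) := by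
  obtain ⟨e⟩ := h.nonempty_ext_obj_quotient_linearEquiv hx i
  exact h.isPrincipal_ext _ i (Module.IsPrincipal.of_surjective e.toLinearMap e.surjective)

end IsQuotientByRegular

end QuotientExt

theorem idealHeight_eq_height (I : Ideal (MvPolynomial (Fin (n + 1)) k)) :
    idealHeight I = I.height := by
  refine le_antisymm ?_ ?_
  · rw [Ideal.height]
    exact le_iInf₂ fun p hp ↦ iInf₂_le (⟨p, hp.isPrime⟩ : PrimeSpectrum _) hp.le
  · refine le_iInf₂ fun p hp ↦ ?_
    rw [← p.height_eq_orderHeight]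
    exact Ideal.height_mono hp

theorem IsQuotientByRegular.isCI_comap_ofList {τ : Type}
    {φ : MvPolynomial (Fin (n + 1)) k →+* MvPolynomial τ k}
    {σ : MvPolynomial τ k →+* MvPolynomial (Fin (n + 1)) k} {p : MvPolynomial (Fin (n + 1)) k}
    {e : ℕ} (h : IsQuotientByRegular φ p) (he : 0 < e) (hp : p.IsHomogeneous e)
    (hφσ : ∀ q, φ (σ q) = q) (hσ : ∀ {q d}, q.IsHomogeneous d → (σ q).IsHomogeneous d)
    {l : List (MvPolynomial τ k)} (hl : ∀ q ∈ l, ∃ d, 0 < d ∧ q.IsHomogeneous d)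
    (hreg : Sequence.IsRegular (MvPolynomial τ k) l) : IsCI ((Ideal.ofList l).comap φ) := by
  refine ⟨p :: l.map σ, ?_, h.isRegular_cons ?_, ?_⟩
  · simp only [List.forall_mem_cons, List.forall_mem_map]
    exact ⟨⟨e, he, hp⟩, fun q hq ↦ (hl q hq).imp fun _ hd ↦ ⟨hd.1, hσ hd.2⟩⟩
  · rwa [List.map_map, show φ ∘ σ = id from funext hφσ, List.map_id]
  · rw [h.comap_eq_span_sup_map hφσ, Ideal.map_ofList, ← Ideal.ofList_cons]

/-- If a height-three arithmetically Gorenstein ideal contains a nonzero homogeneous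
element of degree 1, then it is a complete intersection. -/
theorem stmt_10 (I : Ideal (MvPolynomial (Fin (n+1)) k))
    (hGor : IsArithGorHt3 I)
    (hlin : ∃ f ∈ I, f ≠ 0 ∧ MvPolynomial.IsHomogeneous f 1) :
    IsCI I := by
  obtain ⟨hI, ⟨T, hT, rfl⟩, hht, hvanish, hcyclic⟩ := hGor
  obtain ⟨ℓ, hℓI, hℓ0, hℓ⟩ := hlin
  obtain ⟨φ, σ, hφσ, hker, hφ, hσ⟩ := exists_algHom_section_ker_eq_span hℓ hℓ0
  have h : IsQuotientByRegular φ.toRingHom ℓ :=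
    ⟨fun q ↦ ⟨σ q, hφσ q⟩, hker, IsSMulRegular.of_ne_zero hℓ0⟩
  have hJ : (Ideal.span T).map φ.toRingHom ≠ ⊤ := fun hJ ↦
    hI (by rw [← h.comap_map_eq_self hℓI, hJ, Ideal.comap_top])
  have hpd : HasProjectiveDimensionLE
      (ModuleCat.of _ (MvPolynomial (Fin n) k ⧸ (Ideal.span T).map φ.toRingHom)) 2 :=
    hasProjectiveDimensionLT_of_forall_subsingleton_ext_self
      (hasProjectiveDimensionLE_mvPolynomial k n _) fun i hi ↦
        h.subsingleton_ext_quotient_map hℓI (hvanish (i + 1) (by omega))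
  obtain ⟨l, hlen, hlJ, hl0, hl⟩ := exists_length_le_two_ofList_eq hJ
    (Set.forall_mem_image.2 fun p hp ↦ (hT p hp).imp fun _ hd ↦ hφ hd)
    (Ideal.map_span φ.toRingHom T).symm hpd
    (h.isPrincipal_ext_quotient_map hℓI ⟨hcyclic.imp fun _ ↦ Eq.symm⟩)
  have hcomap : (Ideal.ofList l).comap φ.toRingHom = Ideal.span T := by
    rw [hlJ, h.comap_map_eq_self hℓI]
  have hreg : Sequence.IsRegular (MvPolynomial (Fin n) k) l :=
    h.isRegular_of_length_le_two hlen hl0 (hlJ ▸ hJ)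
      (by rw [hcomap, ← idealHeight_eq_height, hht]; decide)
  exact hcomap ▸ h.isCI_comap_ofList (σ := σ.toRingHom) one_pos hℓ hφσ hσ hl hreg

end
end

section
/- Assume the field k is infinite and n ≥ 2. Let f, g, h be a regular sequence of homogeneous elements of positive degree in R with deg f ≤ deg g ≤ deg h, and let f', g' ∈ (f,g,h) be homogeneous elements forming a regular sequence with deg f' = deg f and deg g' = deg g. Then there exists a homogeneous element h' ∈ (f,g,h) of degree deg h such that f', g', h' is a regular sequence and (f',g',h') = (f,g,h); in particular {f', g'} extends to a minimal generating set of the complete intersection (f,g,h). -/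
/-
Common setup: `R = k[x₀,…,xₙ]` is the standard graded polynomial ring
`MvPolynomial (Fin (n+1)) k` over a field `k`.
-/

open CategoryTheory MvPolynomial RingTheory

noncomputable section

variable {k : Type} [Field k] {n : ℕ}

/-!
Suppose `F` is a homogeneous regular sequence generating `I`, already containing the first few of
the prescribed elements, and let `x ∈ I` be the next one, of degree `d i`. Write `x = ∑ c j * F j`
with homogeneous coefficients. As `x` is not a combination of the preceding elements, `c j ≠ 0` for
some `j ≥ i`; then `d j ≤ deg x = d i ≤ d j`, so `c j` has degree `0` and is a unit, and `x` may
replace `F j`. Regularity survives because homogeneous regular sequences of positive degree can be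
permuted, so that the replaced element may be assumed to come last.
-/

section RegularSequences

open Sequence

lemma ofFn_perm_cons_removeNth {α : Type*} {m : ℕ} (F : Fin (m + 1) → α) (j : Fin (m + 1)) :
    (List.ofFn F).Perm (F j :: List.ofFn (j.removeNth F)) := by
  have key := j.cycleRange.ofFn_comp_perm (Fin.cons (F j) (j.removeNth F))
  rwa [Fin.cons_comp_cycleRange, Fin.insertNth_self_removeNth, List.ofFn_cons] at key

lemma range_fin_three {α : Type*} (F : Fin 3 → α) : Set.range F = {F 0, F 1, F 2} := by
  ext x
  simp [Fin.exists_fin_succ, eq_comm]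

variable {A M : Type*} [CommRing A] [AddCommGroup M] [Module A M]

lemma ofList_eq_of_perm {l l' : List A} (h : l.Perm l') : Ideal.ofList l = Ideal.ofList l' :=
  congrArg Ideal.span (Set.ext fun _ ↦ h.mem_iff)

lemma ofList_ofFn {m : ℕ} (F : Fin m → A) :
    Ideal.ofList (List.ofFn F) = Ideal.span (Set.range F) :=
  congrArg Ideal.span (Set.ext fun _ ↦ List.mem_ofFn)

lemma span_singleton_sup_le_of_sub_mul_mem {J : Ideal A} {x y c : A} (h : x - c * y ∈ J) :
    Ideal.span {x} ⊔ J ≤ Ideal.span {y} ⊔ J := by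
  refine sup_le ?_ le_sup_right
  rw [Ideal.span_singleton_le_iff_mem, Ideal.mem_span_singleton_sup]
  exact ⟨c, x - c * y, h, by ring⟩

lemma span_singleton_sup_eq_of_sub_mul_mem {J : Ideal A} {x y u : A} (hu : IsUnit u)
    (h : x - u * y ∈ J) : Ideal.span {x} ⊔ J = Ideal.span {y} ⊔ J := by
  obtain ⟨v, hv⟩ := hu.exists_left_inv
  refine (span_singleton_sup_le_of_sub_mul_mem h).antisymm
    (span_singleton_sup_le_of_sub_mul_mem (c := v) ?_)
  have hy : y - v * x = -(v * (x - u * y)) := by linear_combination (-y) * hv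
  exact hy ▸ J.neg_mem (J.mul_mem_left v h)

lemma isWeaklyRegular_concat_of_sub_mul_mem {l : List A} {x y u : A} (hu : IsUnit u)
    (h : IsWeaklyRegular M (l ++ [y])) (hxy : x - u * y ∈ Ideal.ofList l) :
    IsWeaklyRegular M (l ++ [x]) := by
  rw [isWeaklyRegular_append_iff, isWeaklyRegular_singleton_iff,
    isSMulRegular_quotient_iff_mem_of_smul_mem] at h ⊢
  refine ⟨h.1, fun z hz ↦ h.2 z ?_⟩
  have huyz : u • y • z = x • z - (x - u * y) • z := by module
  rw [← Submodule.smul_mem_iff_of_isUnit _ hu, huyz]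
  exact Submodule.sub_mem _ hz (Submodule.smul_mem_smul hxy Submodule.mem_top)

lemma isRegular_of_ofList_eq {l l' : List A} (h : IsRegular M l) (h' : IsWeaklyRegular M l')
    (heq : Ideal.ofList l' = Ideal.ofList l) : IsRegular M l' :=
  ⟨h', heq ▸ h.top_ne_smul⟩

lemma getElem_notMem_ofList_take_of_isRegular {l : List A} (h : IsRegular M l) {i : ℕ}
    (hi : i < l.length) : l[i] ∉ Ideal.ofList (l.take i) := by
  intro hmem
  have hreg := (isSMulRegular_quotient_iff_mem_of_smul_mem _ _).1 (h.regular_mod_prev i hi)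
  refine h.top_ne_smul (top_le_iff.1 fun z _ ↦ ?_).symm
  exact Submodule.smul_mono_left (Ideal.span_mono fun _ ↦ List.mem_of_mem_take)
    (hreg z (Submodule.smul_mem_smul hmem Submodule.mem_top))

lemma notMem_span_image_Iio_of_isRegular_ofFn {m : ℕ} {F : Fin m → A}
    (h : IsRegular M (List.ofFn F)) (i : Fin m) : F i ∉ Ideal.span (F '' Set.Iio i) := by
  have hi : i < (List.ofFn F).length := by simp
  have htake : F '' Set.Iio i ⊆ {a | a ∈ (List.ofFn F).take i} := by
    rintro _ ⟨j, hj : j < i, rfl⟩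
    exact List.mem_take_iff_getElem.2 ⟨j, by simpa using hj, by simp⟩
  have hnot := getElem_notMem_ofList_take_of_isRegular h hi
  rw [List.getElem_ofFn] at hnot
  exact fun hmem ↦ hnot (Ideal.span_mono htake hmem)

end RegularSequences

section Graded

open Sequence

variable {A σ : Type*} [CommRing A] [SetLike σ A] {𝒜 : ℕ → σ}

variable (𝒜) in
/-- `F` is a regular sequence of homogeneous elements of positive degree generating `I`, that is,
it exhibits `I` as a complete intersection; the degree `d i` of `F i` is recorded. -/
structure IsCIGenerators {r : ℕ} (d : Fin r → ℕ) (I : Ideal A) (F : Fin r → A) : Prop where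
  deg_pos : ∀ i, 0 < d i
  mem_deg : ∀ i, F i ∈ 𝒜 (d i)
  isRegular : IsRegular A (List.ofFn F)
  span_range : Ideal.span (Set.range F) = I

lemma IsCIGenerators.exists_deg_of_mem_ofFn {r : ℕ} {d : Fin r → ℕ} {I : Ideal A}
    {F : Fin r → A} (hF : IsCIGenerators 𝒜 d I F) :
    ∀ a ∈ List.ofFn F, ∃ e, 0 < e ∧ a ∈ 𝒜 e :=
  List.forall_mem_ofFn_iff.2 fun i ↦ ⟨d i, hF.deg_pos i, hF.mem_deg i⟩

variable [AddSubgroupClass σ A] [GradedRing 𝒜]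

lemma mem_of_forall_exists_sub_pow_mul_mem {J : Ideal A} (hJ : J.IsHomogeneous 𝒜) {a : A} {e : ℕ}
    (ha : a ∈ 𝒜 e) (he : 0 < e) {x : A} (h : ∀ m, ∃ y, x - a ^ m * y ∈ J) : x ∈ J := by
  rw [hJ.mem_iff]
  intro i
  obtain ⟨y, hy⟩ := h (i + 1)
  have hdeg : ¬ (i + 1) • e ≤ i :=
    (i.lt_succ_self.trans_le (Nat.le_mul_of_pos_right _ he)).not_ge
  have hxi := hJ i hy
  rwa [DirectSum.decompose_sub, DirectSum.sub_apply, AddSubgroupClass.coe_sub,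
    DirectSum.coe_decompose_mul_of_left_mem_of_not_le 𝒜 (SetLike.pow_mem_graded _ ha) hdeg,
    sub_zero] at hxi

open scoped Pointwise in
lemma eq_bot_of_eq_smul_of_isHomogeneous {J : Ideal A} (hJ : J.IsHomogeneous 𝒜) {a : A} {e : ℕ}
    (ha : a ∈ 𝒜 e) (he : 0 < e) {K : Submodule A (A ⧸ J)} (hK : K = a • K) : K = ⊥ := by
  have hpow (m : ℕ) : K = a ^ m • K := by
    induction m with
    | zero => rw [pow_zero, one_smul]
    | succ m ih => rw [pow_succ, mul_smul, ← hK, ← ih]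
  refine (Submodule.eq_bot_iff K).2 fun y hy ↦ ?_
  obtain ⟨x, rfl⟩ := J.mkQ_surjective y
  refine (Submodule.Quotient.mk_eq_zero J).2
    (mem_of_forall_exists_sub_pow_mul_mem hJ ha he fun m ↦ ?_)
  rw [hpow m, Submodule.mem_smul_pointwise_iff_exists] at hy
  obtain ⟨z, -, hz⟩ := hy
  obtain ⟨z, rfl⟩ := J.mkQ_surjective z
  exact ⟨z, (Submodule.Quotient.eq J).1 hz.symm⟩

lemma isWeaklyRegular_of_perm_of_homogeneous {l l' : List A} (hl : ∀ a ∈ l, ∃ d, 0 < d ∧ a ∈ 𝒜 d)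
    (h : IsWeaklyRegular A l) (hp : l.Perm l') : IsWeaklyRegular A l' := by
  refine h.prototype_perm hp ?_
  intro a b rs hsub K hK
  obtain ⟨e, he, ha⟩ := hl a (hsub.subset (by simp))
  refine eq_bot_of_eq_smul_of_isHomogeneous (𝒜 := 𝒜) ?_ ha he hK
  rw [Ideal.smul_eq_mul, Ideal.mul_top]
  refine Ideal.homogeneous_span 𝒜 _ fun c hc ↦ ?_
  obtain ⟨d, -, hd⟩ := hl c (hsub.subset (List.mem_cons_of_mem a (List.mem_cons_of_mem b hc)))
  exact ⟨d, hd⟩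

lemma isRegular_of_perm_of_homogeneous {l l' : List A} (hl : ∀ a ∈ l, ∃ d, 0 < d ∧ a ∈ 𝒜 d)
    (h : IsRegular A l) (hp : l.Perm l') : IsRegular A l' :=
  isRegular_of_ofList_eq h
    (isWeaklyRegular_of_perm_of_homogeneous hl h.toIsWeaklyRegular hp) (ofList_eq_of_perm hp.symm)

lemma isRegular_cons_of_sub_mul_mem {l : List A} {x y u : A}
    (hl : ∀ a ∈ l, ∃ d, 0 < d ∧ a ∈ 𝒜 d) (hx : ∃ d, 0 < d ∧ x ∈ 𝒜 d) (hy : ∃ d, 0 < d ∧ y ∈ 𝒜 d)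
    (hu : IsUnit u) (h : IsRegular A (y :: l)) (hxy : x - u * y ∈ Ideal.ofList l) :
    IsRegular A (x :: l) := by
  have hperm (z : A) : (l ++ [z]).Perm (z :: l) := List.perm_append_singleton z l
  have hlast : IsWeaklyRegular A (l ++ [x]) := isWeaklyRegular_concat_of_sub_mul_mem hu
    (isWeaklyRegular_of_perm_of_homogeneous (List.forall_mem_cons.2 ⟨hy, hl⟩) h.toIsWeaklyRegular
      (hperm y).symm) hxy
  have hxl : ∀ a ∈ x :: l, ∃ d, 0 < d ∧ a ∈ 𝒜 d := List.forall_mem_cons.2 ⟨hx, hl⟩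
  refine isRegular_of_ofList_eq h (isWeaklyRegular_of_perm_of_homogeneous
    (fun a ha ↦ hxl a ((hperm x).mem_iff.1 ha)) hlast (hperm x)) ?_
  rw [Ideal.ofList_cons, Ideal.ofList_cons, span_singleton_sup_eq_of_sub_mul_mem hu hxy]

lemma exists_homogeneous_coeff_of_mem_span_range {ι : Type*} [Fintype ι] {F : ι → A} {d : ι → ℕ}
    (hF : ∀ i, F i ∈ 𝒜 (d i)) {x : A} {e : ℕ} (hx : x ∈ 𝒜 e) (hmem : x ∈ Ideal.span (Set.range F)) :
    ∃ c : ι → A, (∀ i, d i ≤ e → c i ∈ 𝒜 (e - d i)) ∧ (∀ i, e < d i → c i = 0) ∧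
      ∑ i, c i * F i = x := by
  obtain ⟨b, hb⟩ := Ideal.mem_span_range_iff_exists_fun.1 hmem
  refine ⟨fun i ↦ if d i ≤ e then DirectSum.decompose 𝒜 (b i) (e - d i) else 0,
    fun i hi ↦ ?_, fun i hi ↦ if_neg hi.not_ge, ?_⟩
  · simp only [if_pos hi, SetLike.coe_mem]
  · rw [← DirectSum.decompose_of_mem_same 𝒜 hx, ← hb, DirectSum.decompose_sum,
      DFinsupp.finsetSum_apply, AddSubmonoidClass.coe_finsetSum]
    refine Finset.sum_congr rfl fun i _ ↦ ?_
    rw [DirectSum.coe_decompose_mul_of_right_mem 𝒜 e (hF i), ite_mul, zero_mul]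

namespace IsCIGenerators

variable {r : ℕ} {d : Fin r → ℕ} {I : Ideal A} {F : Fin r → A}

lemma comp_perm (hF : IsCIGenerators 𝒜 d I F) (τ : Equiv.Perm (Fin r)) (hd : d ∘ τ = d) :
    IsCIGenerators 𝒜 d I (F ∘ τ) where
  deg_pos := hF.deg_pos
  mem_deg i := congrFun hd i ▸ hF.mem_deg (τ i)
  isRegular := isRegular_of_perm_of_homogeneous hF.exists_deg_of_mem_ofFn hF.isRegular
    (τ.ofFn_comp_perm F).symm
  span_range := by rw [τ.surjective.range_comp, hF.span_range]

lemma update (hF : IsCIGenerators 𝒜 d I F) {j : Fin r} {x u : A} (hx : x ∈ 𝒜 (d j))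
    (hu : IsUnit u) (hxu : x - u * F j ∈ Ideal.span (F '' {j}ᶜ)) :
    IsCIGenerators 𝒜 d I (Function.update F j x) := by
  cases r with
  | zero => exact j.elim0
  | succ m =>
    let G := Function.update F j x
    let l := List.ofFn (j.removeNth F)
    have hFp : (List.ofFn F).Perm (F j :: l) := ofFn_perm_cons_removeNth F j
    have hGp : (List.ofFn G).Perm (x :: l) := by simpa [G] using ofFn_perm_cons_removeNth G j
    have hxl : x - u * F j ∈ Ideal.ofList l := by
      rwa [ofList_ofFn, show j.removeNth F = F ∘ j.succAbove from rfl, Set.range_comp,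
        Fin.range_succAbove]
    have hdeg := fun a ha ↦ hF.exists_deg_of_mem_ofFn a (hFp.mem_iff.2 ha)
    obtain ⟨hFj, hl⟩ := List.forall_mem_cons.1 hdeg
    have hxpos : ∃ e, 0 < e ∧ x ∈ 𝒜 e := ⟨d j, hF.deg_pos j, hx⟩
    refine ⟨hF.deg_pos, ?_, ?_, ?_⟩
    · exact (Function.forall_update_iff F fun i a ↦ a ∈ 𝒜 (d i)).2 ⟨hx, fun i _ ↦ hF.mem_deg i⟩
    · have hFreg : IsRegular A (F j :: l) :=
        isRegular_of_perm_of_homogeneous hF.exists_deg_of_mem_ofFn hF.isRegular hFp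
      exact isRegular_of_perm_of_homogeneous (List.forall_mem_cons.2 ⟨hxpos, hl⟩)
        (isRegular_cons_of_sub_mul_mem hl hxpos hFj hu hFreg hxl) hGp.symm
    · rw [← hF.span_range, ← ofList_ofFn, ← ofList_ofFn, ofList_eq_of_perm hGp,
        ofList_eq_of_perm hFp, Ideal.ofList_cons, Ideal.ofList_cons,
        span_singleton_sup_eq_of_sub_mul_mem hu hxl]

lemma exists_exchange (hF : IsCIGenerators 𝒜 d I F) (h𝒜 : ∀ u ∈ 𝒜 0, u ≠ 0 → IsUnit u)
    (hd : Monotone d) {i : Fin r} {x : A} (hx : x ∈ 𝒜 (d i)) (hxI : x ∈ I)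
    (hxF : x ∉ Ideal.span (F '' Set.Iio i)) :
    ∃ G, IsCIGenerators 𝒜 d I G ∧ G i = x ∧ ∀ m < i, G m = F m := by
  rw [← hF.span_range] at hxI
  obtain ⟨c, hcdeg, hczero, rfl⟩ := exists_homogeneous_coeff_of_mem_span_range hF.mem_deg hx hxI
  obtain ⟨j, hij, hcj⟩ : ∃ j, i ≤ j ∧ c j ≠ 0 := by
    by_contra! hzero
    refine hxF (Ideal.sum_mem _ fun m _ ↦ ?_)
    rcases lt_or_ge m i with hm | hm
    · exact Ideal.mul_mem_left _ _ (Ideal.subset_span ⟨m, hm, rfl⟩)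
    · rw [hzero m hm, zero_mul]
      exact Ideal.zero_mem _
  have hdij : d i = d j := (hd hij).antisymm (not_lt.1 fun h ↦ hcj (hczero j h))
  have hunit : IsUnit (c j) := h𝒜 _ (by simpa [hdij] using hcdeg j hdij.ge) hcj
  have hrest : ∑ m, c m * F m - c j * F j ∈ Ideal.span (F '' {j}ᶜ) := by
    rw [← Finset.sum_erase_eq_sub (Finset.mem_univ j)]
    exact Ideal.sum_mem _ fun m hm ↦
      Ideal.mul_mem_left _ _ (Ideal.subset_span ⟨m, Finset.ne_of_mem_erase hm, rfl⟩)
  refine ⟨_, (hF.update (hdij ▸ hx) hunit hrest).comp_perm (Equiv.swap i j) ?_,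
    by simp, fun m hm ↦ ?_⟩
  · exact (Equiv.comp_swap_eq_update ..).trans (by simp [hdij])
  · have hmj : m ≠ j := (hm.trans_le hij).ne
    simp [Equiv.swap_apply_of_ne_of_ne hm.ne hmj, hmj]

end IsCIGenerators

theorem stmt_11_general (h𝒜 : ∀ u ∈ 𝒜 0, u ≠ 0 → IsUnit u) {r s : ℕ} (hsr : s ≤ r)
    {d : Fin r → ℕ} (hd : Monotone d) {I : Ideal A} {F : Fin r → A} (hF : IsCIGenerators 𝒜 d I F)
    {F' : Fin s → A} (hF'mem : ∀ i, F' i ∈ I) (hF'deg : ∀ i, F' i ∈ 𝒜 (d (i.castLE hsr)))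
    (hF' : ∀ i, F' i ∉ Ideal.span (F' '' Set.Iio i)) :
    ∃ G, IsCIGenerators 𝒜 d I G ∧ ∀ i, G (Fin.castLE hsr i) = F' i := by
  suffices key : ∀ m ≤ s, ∃ G, IsCIGenerators 𝒜 d I G ∧
      ∀ i : Fin s, i < m → G (Fin.castLE hsr i) = F' i by
    obtain ⟨G, hG, hGF'⟩ := key s le_rfl
    exact ⟨G, hG, fun i ↦ hGF' i i.isLt⟩
  intro m
  induction m with
  | zero => exact fun _ ↦ ⟨F, hF, by simp⟩
  | succ m ih =>
    intro hm
    obtain ⟨G, hG, hGF'⟩ := ih (Nat.le_of_succ_le hm)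
    let i : Fin s := ⟨m, hm⟩
    have himage : G '' Set.Iio (i.castLE hsr) ⊆ F' '' Set.Iio i := by
      rintro _ ⟨j, hj : j.val < m, rfl⟩
      exact ⟨⟨j, hj.trans hm⟩, hj, (hGF' ⟨j, hj.trans hm⟩ hj).symm⟩
    obtain ⟨G', hG', hG'i, hG'lt⟩ := hG.exists_exchange h𝒜 hd (hF'deg i) (hF'mem i)
      fun h ↦ hF' i (Ideal.span_mono himage h)
    refine ⟨G', hG', fun j hj ↦ ?_⟩
    rcases Nat.lt_succ_iff_lt_or_eq.1 hj with hjm | hjm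
    · rw [hG'lt _ hjm, hGF' j hjm]
    · rwa [show j = i from Fin.ext hjm]

end Graded

lemma isUnit_of_isHomogeneous_zero_s11 {τ K : Type*} [Field K] {p : MvPolynomial τ K}
    (hp : p.IsHomogeneous 0) (hp0 : p ≠ 0) : IsUnit p := by
  rw [← totalDegree_zero_iff_isHomogeneous, totalDegree_eq_zero_iff_eq_C] at hp
  rw [hp] at hp0 ⊢
  exact (isUnit_iff_ne_zero.2 fun h ↦ hp0 (by rw [h, C_0])).map C

/-- Case 1 in the proof of the main theorem: if `f', g' ∈ (f,g,h)` form a regular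
sequence with `deg f' = deg f` and `deg g' = deg g`, then they can be completed by some
`h' ∈ (f,g,h)` of degree `deg h` to a regular sequence generating `(f,g,h)`. -/
theorem stmt_11 [Infinite k] (hn : 2 ≤ n)
    (f g h f' g' : MvPolynomial (Fin (n+1)) k) (df dg dh : ℕ)
    (hdf : 0 < df) (hdg : 0 < dg) (hdh : 0 < dh)
    (hfg : df ≤ dg) (hgh : dg ≤ dh)
    (hfhom : MvPolynomial.IsHomogeneous f df) (hghom : MvPolynomial.IsHomogeneous g dg)
    (hhhom : MvPolynomial.IsHomogeneous h dh)
    (hreg : RingTheory.Sequence.IsRegular (MvPolynomial (Fin (n+1)) k) [f, g, h])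
    (hf'mem : f' ∈ (Ideal.span {f, g, h} : Ideal (MvPolynomial (Fin (n+1)) k)))
    (hg'mem : g' ∈ (Ideal.span {f, g, h} : Ideal (MvPolynomial (Fin (n+1)) k)))
    (hfhom' : MvPolynomial.IsHomogeneous f' df) (hghom' : MvPolynomial.IsHomogeneous g' dg)
    (hreg' : RingTheory.Sequence.IsRegular (MvPolynomial (Fin (n+1)) k) [f', g']) :
    ∃ h' ∈ (Ideal.span {f, g, h} : Ideal (MvPolynomial (Fin (n+1)) k)),
      MvPolynomial.IsHomogeneous h' dh ∧
      RingTheory.Sequence.IsRegular (MvPolynomial (Fin (n+1)) k) [f', g', h'] ∧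
      Ideal.span {f', g', h'} = (Ideal.span {f, g, h} : Ideal (MvPolynomial (Fin (n+1)) k)) := by
  let _ : GradedAlgebra (homogeneousSubmodule (Fin (n + 1)) k) := gradedAlgebra
  have hF : IsCIGenerators (homogeneousSubmodule (Fin (n + 1)) k) ![df, dg, dh]
      (Ideal.span {f, g, h}) ![f, g, h] :=
    ⟨by simp [Fin.forall_fin_succ, *], by simp [Fin.forall_fin_succ, *], hreg,
      by rw [range_fin_three]; rfl⟩
  obtain ⟨G, hG, hGF'⟩ := stmt_11_general (F' := ![f', g'])
    (fun u hu hu0 ↦ isUnit_of_isHomogeneous_zero_s11 hu hu0) (Nat.le_succ 2)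
    (by simp [Fin.monotone_iff_le_succ, Fin.forall_fin_succ, *]) hF
    (by simp [Fin.forall_fin_succ, *]) (by simp [Fin.forall_fin_succ, *])
    (notMem_span_image_Iio_of_isRegular_ofFn hreg')
  obtain rfl : G 0 = f' := hGF' 0
  obtain rfl : G 1 = g' := hGF' 1
  have hspan := range_fin_three G ▸ hG.span_range
  exact ⟨G 2, hspan ▸ Ideal.subset_span (by simp), hG.mem_deg 2, hG.isRegular, hspan⟩

end
end

section
/- Let R = k[x₀,x₁,x₂,x₃] with its standard grading, let d ≥ 1, and let G ∈ R be a homogeneous polynomial of degree d involving only the variables x₁, x₂, x₃ and whose coefficient of x₁^d is nonzero (so the plane curve {x₀ = G = 0} is disjoint from the line {x₂ = x₃ = 0}). Let I = (x₂,x₃) ∩ (x₀,G) be the homogeneous ideal of the disjoint union of the line and the plane curve. Then: (1) I contains no nonzero homogeneous element of degree 1, and the least degree of a nonzero homogeneous element of I is 2; (2) I contains a regular sequence of two homogeneous elements of degrees 2 and d+1; and (3) I contains no regular sequence of two homogeneous elements each of degree at most d. In other words, a₁(I) = 2 and a₂(I) = d+1, so every complete intersection of least degree inside I has type (2, d+1).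 -/
/-
Common setup: `R = k[x₀,…,xₙ]` is the standard graded polynomial ring
`MvPolynomial (Fin (n+1)) k` over a field `k`.
-/

open CategoryTheory MvPolynomial RingTheory

noncomputable section

variable {k : Type} [Field k] {n : ℕ}

/-!
Let `f ∈ I` be homogeneous of degree at most `d = deg G`. Comparing graded pieces of
`f = a x₀ + b G` gives `f ≡ c G mod x₀` with `c` a scalar. No element of `(x₂, x₃)` or of `(x₀)`
has a term `x₁ᵈ`, while `G` does, so `c = 0` and `x₀ ∣ f`. Hence two elements of `I` of degree at
most `d` share the factor `x₀` and cannot form a regular sequence, and a nonzero linear form in `I`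
would be a multiple of `x₀` lying in `(x₂, x₃)`. On the other hand `x₀ x₂` and `x₃ G` are coprime
elements of `I`, hence a regular sequence because the polynomial ring is factorial.
-/

section RegularSequences

open RingTheory.Sequence

variable {A : Type*} [CommRing A]

open scoped Pointwise in
theorem isWeaklyRegular_pair_iff {f g : A} :
    IsWeaklyRegular A [f, g] ↔ IsSMulRegular A f ∧ ∀ x, f ∣ g * x → f ∣ x := by
  have mem_smul_top (x : A) : x ∈ f • (⊤ : Submodule A A) ↔ f ∣ x := by
    rw [← Submodule.ideal_span_singleton_smul, smul_eq_mul, Ideal.mul_top,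
      Ideal.mem_span_singleton]
  rw [isWeaklyRegular_cons_iff, isWeaklyRegular_singleton_iff,
    isSMulRegular_quotient_iff_mem_of_smul_mem]
  simp only [mem_smul_top, smul_eq_mul]

theorem isRelPrime_of_isWeaklyRegular_pair {f g : A} (h : IsWeaklyRegular A [f, g]) :
    IsRelPrime f g := by
  obtain ⟨hf, hfg⟩ := isWeaklyRegular_pair_iff.1 h
  rintro p ⟨f', rfl⟩ ⟨g', rfl⟩
  obtain ⟨u, hu⟩ : p * f' ∣ f' := hfg f' ⟨g', by ring⟩
  have : p * u = 1 := hf <| by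
    simp only [smul_eq_mul, mul_one]
    linear_combination (-p) * hu
  exact IsUnit.of_mul_eq_one u this

theorem isWeaklyRegular_pair_of_isRelPrime_s13 [IsDomain A] [DecompositionMonoid A] {f g : A}
    (hf : f ≠ 0) (hfg : IsRelPrime f g) : IsWeaklyRegular A [f, g] :=
  isWeaklyRegular_pair_iff.2 ⟨.of_ne_zero hf, fun _ ↦ hfg.dvd_of_dvd_mul_left⟩

theorem isRegular_of_forall_mem_of_ne_top {l : List A} {I : Ideal A} (hl : IsWeaklyRegular A l)
    (hlI : ∀ f ∈ l, f ∈ I) (hI : I ≠ ⊤) : IsRegular A l := by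
  refine ⟨hl, fun h ↦ hI (top_le_iff.1 ?_)⟩
  rw [h, smul_eq_mul, Ideal.mul_top]
  exact Ideal.span_le.2 hlI

end RegularSequences

section Polynomials

variable {σ R : Type*} [CommSemiring R]

theorem homogeneousComponent_mul_of_isHomogeneous_right {b : MvPolynomial σ R} {m : ℕ}
    (hb : b.IsHomogeneous m) (a : MvPolynomial σ R) (e : ℕ) :
    homogeneousComponent e (a * b) =
      if m ≤ e then homogeneousComponent (e - m) a * b else 0 := by
  let := gradedAlgebra (σ := σ) (R := R)
  have decompose_eq (φ : MvPolynomial σ R) (n : ℕ) :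
      (DirectSum.decompose (homogeneousSubmodule σ R) φ n : MvPolynomial σ R) =
        homogeneousComponent n φ :=
    decomposition.decompose'_apply φ n
  simpa only [decompose_eq] using
    DirectSum.coe_decompose_mul_of_right_mem (homogeneousSubmodule σ R) (a := a) e hb

theorem coeff_single_eq_zero_of_mem_span_X_image {s : Set σ} {j : σ} (hj : j ∉ s)
    {f : MvPolynomial σ R} (hf : f ∈ Ideal.span (X '' s)) (d : ℕ) :
    coeff (Finsupp.single j d) f = 0 := by
  by_contra hne
  obtain ⟨i, his, hi⟩ := mem_ideal_span_X_image.1 hf _ (mem_support_iff.2 hne)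
  exact hi (Finsupp.single_eq_of_ne (ne_of_mem_of_not_mem his hj))

theorem mem_span_X_image_singleton {i : σ} {f : MvPolynomial σ R} :
    f ∈ Ideal.span (X '' {i}) ↔ X i ∣ f := by
  rw [Set.image_singleton, Ideal.mem_span_singleton]

theorem coeff_single_eq_zero_of_X_dvd {i j : σ} (hij : i ≠ j) {f : MvPolynomial σ R}
    (hf : X i ∣ f) (d : ℕ) : coeff (Finsupp.single j d) f = 0 :=
  coeff_single_eq_zero_of_mem_span_X_image (Set.notMem_singleton_iff.2 hij.symm)
    (mem_span_X_image_singleton.2 hf) d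

theorem two_le_of_X_dvd_of_mem_span_X_image {s : Set σ} {i : σ} (hi : i ∉ s)
    {f : MvPolynomial σ R} (hf0 : f ≠ 0) (hif : X i ∣ f) (hf : f ∈ Ideal.span (X '' s)) {e : ℕ}
    (hfe : f.IsHomogeneous e) : 2 ≤ e := by
  obtain ⟨m, hm⟩ := support_nonempty.2 hf0
  obtain ⟨i, rfl, hmi⟩ := mem_ideal_span_X_image.1 (mem_span_X_image_singleton.2 hif) m hm
  obtain ⟨j, hjs, hmj⟩ := mem_ideal_span_X_image.1 hf m hm
  classical
  calc
    2 ≤ m i + m j := by lia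
    _ ≤ m.degree := Finset.add_le_sum (fun _ _ ↦ Nat.zero_le _) (Finsupp.mem_support_iff.2 hmi)
      (Finsupp.mem_support_iff.2 hmj) (ne_of_mem_of_not_mem hjs hi).symm
    _ = e := by rw [Finsupp.degree_eq_weight_one]; exact hfe (mem_support_iff.1 hm)

theorem span_X_image_ne_top [Nontrivial R] (s : Set σ) :
    Ideal.span (X '' s : Set (MvPolynomial σ R)) ≠ ⊤ := by
  refine (Ideal.ne_top_iff_one _).2 fun h ↦ ?_
  have hsupport : 0 ∈ (1 : MvPolynomial σ R).support :=
    mem_support_iff.2 (coeff_zero_one.trans_ne one_ne_zero)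
  obtain ⟨_, -, h0⟩ := mem_ideal_span_X_image.1 h 0 hsupport
  exact h0 rfl

end Polynomials

section PolynomialRings

variable {σ R : Type*} [CommRing R]

theorem exists_dvd_sub_C_mul_of_mem_span_pair {f h G : MvPolynomial σ R} {m d e : ℕ}
    (hf : f ∈ Ideal.span {h, G}) (hfe : f.IsHomogeneous e) (hh : h.IsHomogeneous m)
    (hG : G.IsHomogeneous d) (hed : e ≤ d) : ∃ c : R, h ∣ f - C c * G := by
  obtain ⟨a, b, hab⟩ := Ideal.mem_span_pair.1 hf
  have component_eq :
      homogeneousComponent e (a * h) + homogeneousComponent e (b * G) = f := by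
    rw [← map_add, hab, homogeneousComponent_eq_self hfe]
  have dvd_component : h ∣ homogeneousComponent e (a * h) := by
    rw [homogeneousComponent_mul_of_isHomogeneous_right hh]
    split_ifs
    exacts [dvd_mul_left _ _, dvd_zero _]
  obtain ⟨c, hc⟩ : ∃ c : R, homogeneousComponent e (b * G) = C c * G := by
    rw [homogeneousComponent_mul_of_isHomogeneous_right hG]
    split_ifs with hde
    · exact ⟨coeff 0 b, by rw [Nat.sub_eq_zero_of_le hed, homogeneousComponent_zero]⟩
    · exact ⟨0, by rw [C_0, zero_mul]⟩
  exact ⟨c, by rwa [← component_eq, hc, add_sub_cancel_right]⟩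

theorem isRelPrime_X_of_coeff_single_ne_zero [IsDomain R] {i j : σ} (hij : i ≠ j)
    {f : MvPolynomial σ R} {d : ℕ} (hf : coeff (Finsupp.single j d) f ≠ 0) :
    IsRelPrime (X i) f :=
  X_prime.irreducible.isRelPrime_iff_not_dvd.2 fun h ↦ hf (coeff_single_eq_zero_of_X_dvd hij h d)

theorem isRelPrime_X_X [IsDomain R] {i j : σ} (hij : i ≠ j) :
    IsRelPrime (X i : MvPolynomial σ R) (X j) :=
  isRelPrime_X_of_coeff_single_ne_zero (d := 1) hij (by simp)

end PolynomialRings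

section LinearUnion

variable {σ R : Type*} [CommRing R]

/-- The ideal of the union of the linear subspace `xⱼ = 0`, `j ∈ s`, and the hypersurface `G = 0`
of the hyperplane `xᵢ = 0`. For `s = {2, 3}` and `i = 0` in four variables this is the ideal of a
line and a plane curve. -/
def linearUnionIdeal (s : Set σ) (i : σ) (G : MvPolynomial σ R) : Ideal (MvPolynomial σ R) :=
  Ideal.span (X '' s) ⊓ Ideal.span {X i, G}

variable {s : Set σ} {i j : σ} {G : MvPolynomial σ R} {d : ℕ}

theorem linearUnionIdeal_ne_top [Nontrivial R] : linearUnionIdeal s i G ≠ ⊤ :=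
  ne_top_of_le_ne_top (span_X_image_ne_top s) inf_le_left

theorem X_mul_X_mem_linearUnionIdeal {p : σ} (hp : p ∈ s) :
    X i * X p ∈ linearUnionIdeal s i G :=
  ⟨Ideal.mul_mem_left _ _ (Ideal.subset_span (Set.mem_image_of_mem X hp)),
    Ideal.mul_mem_right _ _ (Ideal.subset_span (Set.mem_insert _ _))⟩

theorem X_mul_mem_linearUnionIdeal {q : σ} (hq : q ∈ s) :
    X q * G ∈ linearUnionIdeal s i G :=
  ⟨Ideal.mul_mem_right _ _ (Ideal.subset_span (Set.mem_image_of_mem X hq)),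
    Ideal.mul_mem_left _ _ (Ideal.subset_span (Set.mem_insert_of_mem _ rfl))⟩

theorem isRegular_X_mul_X_X_mul [IsDomain R] [UniqueFactorizationMonoid R] {p q : σ}
    (hp : p ∈ s) (hq : q ∈ s) (hpq : p ≠ q) (hi : i ∉ s) (hj : j ∉ s) (hij : i ≠ j)
    (hGcoeff : coeff (Finsupp.single j d) G ≠ 0) :
    Sequence.IsRegular (MvPolynomial σ R) [X i * X p, X q * G] := by
  have coprime : IsRelPrime (X i * X p) (X q * G) :=
    .mul_left
      ((isRelPrime_X_X (ne_of_mem_of_not_mem hq hi).symm).mul_right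
        (isRelPrime_X_of_coeff_single_ne_zero hij hGcoeff))
      ((isRelPrime_X_X hpq).mul_right
        (isRelPrime_X_of_coeff_single_ne_zero (ne_of_mem_of_not_mem hp hj) hGcoeff))
  refine isRegular_of_forall_mem_of_ne_top
    (isWeaklyRegular_pair_of_isRelPrime_s13 (mul_ne_zero (X_ne_zero i) (X_ne_zero p)) coprime)
    ?_ (linearUnionIdeal_ne_top (s := s) (i := i) (G := G))
  exact List.forall_mem_cons.2 ⟨X_mul_X_mem_linearUnionIdeal hp,
    List.forall_mem_singleton.2 (X_mul_mem_linearUnionIdeal hq)⟩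

theorem X_dvd_of_mem_linearUnionIdeal [NoZeroDivisors R] (hj : j ∉ s) (hij : i ≠ j)
    (hG : G.IsHomogeneous d) (hGcoeff : coeff (Finsupp.single j d) G ≠ 0)
    {f : MvPolynomial σ R} (hf : f ∈ linearUnionIdeal s i G) {e : ℕ} (hfe : f.IsHomogeneous e)
    (hed : e ≤ d) : X i ∣ f := by
  obtain ⟨c, hc⟩ := exists_dvd_sub_C_mul_of_mem_span_pair hf.2 hfe (isHomogeneous_X R i) hG hed
  have coeff_eq_zero : c * coeff (Finsupp.single j d) G = 0 := by
    simpa [coeff_single_eq_zero_of_mem_span_X_image hj hf.1 d] using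
      coeff_single_eq_zero_of_X_dvd hij hc d
  obtain rfl : c = 0 := (mul_eq_zero.1 coeff_eq_zero).resolve_right hGcoeff
  simpa using hc

theorem two_le_of_mem_linearUnionIdeal [NoZeroDivisors R] (hd : 1 ≤ d) (hi : i ∉ s)
    (hj : j ∉ s) (hij : i ≠ j) (hG : G.IsHomogeneous d)
    (hGcoeff : coeff (Finsupp.single j d) G ≠ 0) {f : MvPolynomial σ R}
    (hf : f ∈ linearUnionIdeal s i G) (hf0 : f ≠ 0) {e : ℕ} (hfe : f.IsHomogeneous e) :
    2 ≤ e := by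
  by_contra! he
  have hif : X i ∣ f := X_dvd_of_mem_linearUnionIdeal hj hij hG hGcoeff hf hfe (by lia)
  exact he.not_ge (two_le_of_X_dvd_of_mem_span_X_image hi hf0 hif hf.1 hfe)

theorem lt_max_of_isRegular_of_mem_linearUnionIdeal [IsDomain R] (hj : j ∉ s) (hij : i ≠ j)
    (hG : G.IsHomogeneous d) (hGcoeff : coeff (Finsupp.single j d) G ≠ 0)
    {f g : MvPolynomial σ R} (hf : f ∈ linearUnionIdeal s i G) (hg : g ∈ linearUnionIdeal s i G)
    {e₁ e₂ : ℕ} (hfe : f.IsHomogeneous e₁) (hge : g.IsHomogeneous e₂)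
    (hreg : Sequence.IsRegular (MvPolynomial σ R) [f, g]) : d < max e₁ e₂ := by
  by_contra! hle
  obtain ⟨he₁, he₂⟩ := max_le_iff.1 hle
  have hif : X i ∣ f := X_dvd_of_mem_linearUnionIdeal hj hij hG hGcoeff hf hfe he₁
  have hig : X i ∣ g := X_dvd_of_mem_linearUnionIdeal hj hij hG hGcoeff hg hge he₂
  exact X_prime.not_isUnit (isRelPrime_of_isWeaklyRegular_pair hreg.toIsWeaklyRegular hif hig)

end LinearUnion

section ADeg

variable {I : Ideal (MvPolynomial (Fin (n + 1)) k)} {d : ℕ}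

theorem aDeg_one_eq (hI : I ≠ ⊤) (hmin : ∀ f ∈ I, f ≠ 0 → ∀ e, f.IsHomogeneous e → d ≤ e)
    {f : MvPolynomial (Fin (n + 1)) k} (hf : f ∈ I) (hf0 : f ≠ 0) (hfd : f.IsHomogeneous d) :
    aDeg 1 I = d := by
  refine IsLeast.csInf_eq ⟨?_, ?_⟩
  · have hfI : ∀ g ∈ [f], g ∈ I := List.forall_mem_singleton.2 hf
    have hreg : Sequence.IsWeaklyRegular (MvPolynomial (Fin (n + 1)) k) [f] :=
      (Sequence.isWeaklyRegular_singleton_iff _ _).2 (.of_ne_zero hf0)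
    exact ⟨[f], rfl, hfI, List.forall_mem_singleton.2 ⟨d, le_rfl, hfd⟩,
      isRegular_of_forall_mem_of_ne_top hreg hfI hI⟩
  · rintro b ⟨l, hl, hlI, hlb, hreg⟩
    obtain ⟨g, rfl⟩ := List.length_eq_one_iff.1 hl
    obtain ⟨e, heb, hge⟩ := List.forall_mem_singleton.1 hlb
    have hg0 : g ≠ 0 := by
      rintro rfl
      exact IsSMulRegular.not_zero
        ((Sequence.isWeaklyRegular_singleton_iff _ _).1 hreg.toIsWeaklyRegular)
    exact (hmin g (List.forall_mem_singleton.1 hlI) hg0 e hge).trans heb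

theorem aDeg_two_eq
    (hmin : ∀ f ∈ I, ∀ g ∈ I, ∀ e₁ e₂, f.IsHomogeneous e₁ → g.IsHomogeneous e₂ →
      Sequence.IsRegular (MvPolynomial (Fin (n + 1)) k) [f, g] → d ≤ max e₁ e₂)
    {f g : MvPolynomial (Fin (n + 1)) k} (hf : f ∈ I) (hg : g ∈ I) {e₁ e₂ : ℕ}
    (hfe : f.IsHomogeneous e₁) (hge : g.IsHomogeneous e₂) (hd : max e₁ e₂ = d)
    (hreg : Sequence.IsRegular (MvPolynomial (Fin (n + 1)) k) [f, g]) : aDeg 2 I = d := by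
  refine IsLeast.csInf_eq ⟨?_, ?_⟩
  · subst hd
    exact ⟨[f, g], rfl, List.forall_mem_cons.2 ⟨hf, List.forall_mem_singleton.2 hg⟩,
      List.forall_mem_cons.2 ⟨⟨e₁, le_max_left _ _, hfe⟩,
        List.forall_mem_singleton.2 ⟨e₂, le_max_right _ _, hge⟩⟩, hreg⟩
  · rintro b ⟨l, hl, hlI, hlb, hreg'⟩
    obtain ⟨f', g', rfl⟩ := List.length_eq_two.1 hl
    simp only [List.forall_mem_cons] at hlI hlb
    obtain ⟨⟨b₁, hb₁, hfb⟩, ⟨b₂, hb₂, hgb⟩, -⟩ := hlb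
    exact (hmin f' hlI.1 g' hlI.2.1 b₁ b₂ hfb hgb hreg').trans (max_le hb₁ hb₂)

end ADeg

theorem stmt_13_general {s : Set (Fin (n + 1))} (hs : s.Nontrivial) {i j : Fin (n + 1)}
    (hi : i ∉ s) (hj : j ∉ s) (hij : i ≠ j) {d : ℕ} (hd : 1 ≤ d)
    {G : MvPolynomial (Fin (n + 1)) k} (hG : G.IsHomogeneous d)
    (hGcoeff : coeff (Finsupp.single j d) G ≠ 0) :
    ((∀ f ∈ linearUnionIdeal s i G, f ≠ 0 → ∀ e, f.IsHomogeneous e → 2 ≤ e) ∧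
      (∃ f ∈ linearUnionIdeal s i G, f ≠ 0 ∧ f.IsHomogeneous 2)) ∧
    (∃ f g : MvPolynomial (Fin (n + 1)) k,
      f ∈ linearUnionIdeal s i G ∧ g ∈ linearUnionIdeal s i G ∧
      f.IsHomogeneous 2 ∧ g.IsHomogeneous (d + 1) ∧
      Sequence.IsRegular (MvPolynomial (Fin (n + 1)) k) [f, g]) ∧
    (¬ ∃ (f g : MvPolynomial (Fin (n + 1)) k) (e₁ e₂ : ℕ),
      f ∈ linearUnionIdeal s i G ∧ g ∈ linearUnionIdeal s i G ∧
      e₁ ≤ d ∧ e₂ ≤ d ∧ f.IsHomogeneous e₁ ∧ g.IsHomogeneous e₂ ∧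
      Sequence.IsRegular (MvPolynomial (Fin (n + 1)) k) [f, g]) ∧
    aDeg 1 (linearUnionIdeal s i G) = 2 ∧ aDeg 2 (linearUnionIdeal s i G) = d + 1 := by
  obtain ⟨p, hp, q, hq, hpq⟩ := hs
  have hf : X i * X p ∈ linearUnionIdeal s i G := X_mul_X_mem_linearUnionIdeal hp
  have hg : X q * G ∈ linearUnionIdeal s i G := X_mul_mem_linearUnionIdeal hq
  have hf0 : (X i * X p : MvPolynomial (Fin (n + 1)) k) ≠ 0 :=
    mul_ne_zero (X_ne_zero i) (X_ne_zero p)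
  have hf2 : (X i * X p : MvPolynomial (Fin (n + 1)) k).IsHomogeneous 2 :=
    (isHomogeneous_X k i).mul (isHomogeneous_X k p)
  have hgd : (X q * G).IsHomogeneous (d + 1) := add_comm 1 d ▸ (isHomogeneous_X k q).mul hG
  have hreg := isRegular_X_mul_X_X_mul hp hq hpq hi hj hij hGcoeff
  have hmin₁ : ∀ f ∈ linearUnionIdeal s i G, f ≠ 0 → ∀ e, f.IsHomogeneous e → 2 ≤ e :=
    fun _ hf hf0 _ hfe ↦ two_le_of_mem_linearUnionIdeal hd hi hj hij hG hGcoeff hf hf0 hfe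
  have hmin₂ : ∀ f ∈ linearUnionIdeal s i G, ∀ g ∈ linearUnionIdeal s i G, ∀ e₁ e₂,
      f.IsHomogeneous e₁ → g.IsHomogeneous e₂ →
        Sequence.IsRegular (MvPolynomial (Fin (n + 1)) k) [f, g] → d < max e₁ e₂ :=
    fun _ hf _ hg _ _ ↦ lt_max_of_isRegular_of_mem_linearUnionIdeal hj hij hG hGcoeff hf hg
  refine ⟨⟨hmin₁, _, hf, hf0, hf2⟩, ⟨_, _, hf, hg, hf2, hgd, hreg⟩, ?_,
    aDeg_one_eq linearUnionIdeal_ne_top hmin₁ hf hf0 hf2,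
    aDeg_two_eq hmin₂ hf hg hf2 hgd (max_eq_right (by lia)) hreg⟩
  rintro ⟨f, g, e₁, e₂, hf, hg, he₁, he₂, hfe, hge, hreg⟩
  exact (hmin₂ f hf g hg e₁ e₂ hfe hge hreg).not_ge (max_le he₁ he₂)

/-- For the disjoint union of a line and a plane curve of degree `d` in `ℙ³`:
the ideal `I = (x₂,x₃) ∩ (x₀,G)` has least degree 2, contains a regular sequence of
degrees `(2, d+1)`, and contains no regular sequence of two elements of degrees `≤ d`;
hence `a₁(I) = 2` and `a₂(I) = d+1`. -/
theorem stmt_13 (d : ℕ) (hd : 1 ≤ d) (G : MvPolynomial (Fin 4) k)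
    (hGdeg : MvPolynomial.IsHomogeneous G d)
    (hGvars : ∀ m ∈ G.support, m 0 = 0)
    (hGcoeff : MvPolynomial.coeff (Finsupp.single 1 d) G ≠ 0)
    (I : Ideal (MvPolynomial (Fin 4) k))
    (hI : I = (Ideal.span {MvPolynomial.X 2, MvPolynomial.X 3} : Ideal (MvPolynomial (Fin 4) k)) ⊓
      Ideal.span {MvPolynomial.X 0, G}) :
    ((∀ f ∈ I, f ≠ 0 → ∀ e, MvPolynomial.IsHomogeneous f e → 2 ≤ e) ∧
      (∃ f ∈ I, f ≠ 0 ∧ MvPolynomial.IsHomogeneous f 2)) ∧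
    (∃ f g : MvPolynomial (Fin 4) k, f ∈ I ∧ g ∈ I ∧
      MvPolynomial.IsHomogeneous f 2 ∧ MvPolynomial.IsHomogeneous g (d+1) ∧
      RingTheory.Sequence.IsRegular (MvPolynomial (Fin 4) k) [f, g]) ∧
    (¬ ∃ (f g : MvPolynomial (Fin 4) k) (e₁ e₂ : ℕ), f ∈ I ∧ g ∈ I ∧
      e₁ ≤ d ∧ e₂ ≤ d ∧ MvPolynomial.IsHomogeneous f e₁ ∧ MvPolynomial.IsHomogeneous g e₂ ∧
      RingTheory.Sequence.IsRegular (MvPolynomial (Fin 4) k) [f, g]) ∧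
    aDeg 1 I = 2 ∧ aDeg 2 I = d + 1 := by
  rw [hI, ← Set.image_pair]
  exact stmt_13_general (Set.nontrivial_pair (by decide)) (by decide) (by decide) (by decide) hd
    hGdeg hGcoeff

end
end
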